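/- arXiv:0810.0451 — 4 statements merged into one kernel-verified Lean document; each statement's English description precedes it below -/
import Mathlib

section
/- (Noncommutative Cartan uniqueness theorem.) Let F : [B(H)^n]_γ → [B(H)^n]_γ be a free holomorphic map such that F(0)=0 and F'(0)=I_n (the identity on ℂ^n). Then F(X_1,...,X_n) = (X_1,...,X_n) for every (X_1,...,X_n) ∈ [B(H)^n]_γ. -/
noncomputable section

open Filter

namespace NC

variable {H : Type*} [NormedAddCommGroup H] [InnerProductSpace ℂ H] [CompleteSpace H]

/-- The product `X_α = X_{i₁} ⋯ X_{i_k}` for a word `α = g_{i₁} ⋯ g_{i_k}`. -/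
def wordProd {n : ℕ} (X : Fin n → H →L[ℂ] H) (w : List (Fin n)) : H →L[ℂ] H :=
  (w.map X).prod

/-- The row norm `‖X₁X₁^* + ⋯ + XₙXₙ^*‖^{1/2}` of a tuple. -/
def rowNorm {n : ℕ} (X : Fin n → H →L[ℂ] H) : ℝ :=
  Real.sqrt ‖∑ i, X i * ContinuousLinearMap.adjoint (X i)‖

/-- The open operatorial ball `[B(H)ⁿ]_γ`. -/
def ball (n : ℕ) (H : Type*) [NormedAddCommGroup H] [InnerProductSpace ℂ H]
    [CompleteSpace H] (γ : ℝ) : Set (Fin n → H →L[ℂ] H) :=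
  {X | rowNorm X < γ}

/-- The closed operatorial ball `[B(H)ⁿ]_γ⁻`. -/
def cball (n : ℕ) (H : Type*) [NormedAddCommGroup H] [InnerProductSpace ℂ H]
    [CompleteSpace H] (γ : ℝ) : Set (Fin n → H →L[ℂ] H) :=
  {X | rowNorm X ≤ γ}

/-- The homogeneous part of degree `k` of the power series with coefficients `a`,
evaluated at `X`:  `∑_{|α|=k} a_α X_α`. -/
def homog {n : ℕ} (a : List (Fin n) → ℂ) (X : Fin n → H →L[ℂ] H) (k : ℕ) :
    H →L[ℂ] H :=
  ∑ w : Fin k → Fin n, a (List.ofFn w) • wordProd X (List.ofFn w)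

/-- `RepOn γ a F` means that the free power series with coefficients `a` converges in
operator norm to `F X` at every point `X` of the open ball `[B(H)ⁿ]_γ`; i.e. `F` is the
free holomorphic function with coefficients `a` on `[B(H)ⁿ]_γ`. -/
def RepOn {n : ℕ} (γ : ℝ) (a : List (Fin n) → ℂ)
    (F : (Fin n → H →L[ℂ] H) → H →L[ℂ] H) : Prop :=
  ∀ X ∈ ball n H γ,
    Tendsto (fun N => ∑ k ∈ Finset.range N, homog a X k) atTop (nhds (F X))

/-- `F` is a free holomorphic function (with scalar coefficients) on `[B(H)ⁿ]_γ`. -/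
def IsFreeHolo {n : ℕ} (γ : ℝ) (F : (Fin n → H →L[ℂ] H) → H →L[ℂ] H) : Prop :=
  ∃ a, RepOn γ a F

/-- `F` is a free holomorphic map `[B(H)ⁿ]_γ → B(H)^m`. -/
def IsFreeHoloMap {n m : ℕ} (γ : ℝ)
    (F : (Fin n → H →L[ℂ] H) → Fin m → H →L[ℂ] H) : Prop :=
  ∀ i, IsFreeHolo γ fun X => F X i

/-- `Ψ` is a free holomorphic automorphism of `[B(H)ⁿ]_γ`: a free holomorphic map of the
ball to itself admitting a free holomorphic inverse. -/
def IsFreeAut {n : ℕ} (γ : ℝ) (Ψ : (Fin n → H →L[ℂ] H) → Fin n → H →L[ℂ] H) : Prop :=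
  IsFreeHoloMap γ Ψ ∧ Set.MapsTo Ψ (ball n H γ) (ball n H γ) ∧
    ∃ Φ, IsFreeHoloMap γ Φ ∧ Set.MapsTo Φ (ball n H γ) (ball n H γ) ∧
      (∀ X ∈ ball n H γ, Φ (Ψ X) = X) ∧ ∀ X ∈ ball n H γ, Ψ (Φ X) = X

end NC


namespace NC

lemma exists_orthonormal_words {H : Type*} [NormedAddCommGroup H] [InnerProductSpace ℂ H]
    [CompleteSpace H] (hH : ¬ FiniteDimensional ℂ H) (n : ℕ) :
    ∃ e : List (Fin n) → H, Orthonormal ℂ e := by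
  obtain ⟨w, b, hb⟩ := exists_hilbertBasis ℂ H
  have hinf : Infinite w := by
    by_contra hfin
    rw [not_infinite_iff_finite] at hfin
    have := Fintype.ofFinite w
    exact hH (Module.Basis.finiteDimensional_of_finite b.toOrthonormalBasis.toBasis)
  refine ⟨fun l => b (Infinite.natEmbedding w (Encodable.encode l)), ?_⟩
  exact b.orthonormal.comp _
    ((Infinite.natEmbedding w).injective.comp Encodable.encode_injective)

lemma norm_comp_le_rowNorm {H : Type*} [NormedAddCommGroup H] [InnerProductSpace ℂ H]
    [CompleteSpace H] {n : ℕ} (A : Fin n → H →L[ℂ] H) (i : Fin n) : ‖A i‖ ≤ rowNorm A := by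
  rw [← LinearIsometryEquiv.norm_map ContinuousLinearMap.adjoint (A i)]
  refine ContinuousLinearMap.opNorm_le_bound _ (Real.sqrt_nonneg _) fun u => ?_
  have h1 : ∀ j, RCLike.re (inner ℂ ((A j * ContinuousLinearMap.adjoint (A j)) u) u)
      = ‖ContinuousLinearMap.adjoint (A j) u‖ ^ 2 := by
    intro j
    rw [ContinuousLinearMap.mul_apply, ← ContinuousLinearMap.adjoint_inner_right,
      inner_self_eq_norm_sq]
  have h2 : ‖ContinuousLinearMap.adjoint (A i) u‖ ^ 2 ≤
      ‖∑ i, A i * ContinuousLinearMap.adjoint (A i)‖ * ‖u‖ ^ 2 := by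
    calc ‖ContinuousLinearMap.adjoint (A i) u‖ ^ 2
        ≤ ∑ j, ‖ContinuousLinearMap.adjoint (A j) u‖ ^ 2 :=
          Finset.single_le_sum (f := fun j => ‖ContinuousLinearMap.adjoint (A j) u‖ ^ 2)
            (fun j _ => by positivity) (Finset.mem_univ i)
      _ = RCLike.re (inner ℂ ((∑ i, A i * ContinuousLinearMap.adjoint (A i)) u) u) := by
          rw [ContinuousLinearMap.sum_apply, sum_inner, map_sum]
          exact Finset.sum_congr rfl fun j _ => (h1 j).symm
      _ ≤ ‖(∑ i, A i * ContinuousLinearMap.adjoint (A i)) u‖ * ‖u‖ := re_inner_le_norm _ _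
      _ ≤ (‖∑ i, A i * ContinuousLinearMap.adjoint (A i)‖ * ‖u‖) * ‖u‖ := by
          gcongr
          exact ContinuousLinearMap.le_opNorm _ _
      _ = _ := by ring
  unfold rowNorm
  rw [← Real.sqrt_sq (norm_nonneg u), ← Real.sqrt_mul (norm_nonneg _)]
  exact Real.le_sqrt_of_sq_le h2

/-- Truncated creation operators on the words in `T`, scaled by `r`. -/
def shiftOp {H : Type*} [NormedAddCommGroup H] [InnerProductSpace ℂ H]
    {n : ℕ} (e : List (Fin n) → H) (T : Finset (List (Fin n))) (r : ℝ)
    (i : Fin n) : H →L[ℂ] H :=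
  (r : ℂ) • ∑ w ∈ T, InnerProductSpace.rankOne ℂ (e (i :: w)) (e w)

lemma shiftOp_apply_mem {H : Type*} [NormedAddCommGroup H] [InnerProductSpace ℂ H]
    {n : ℕ} {e : List (Fin n) → H} (he : Orthonormal ℂ e)
    (T : Finset (List (Fin n))) (r : ℝ) (i : Fin n) (w : List (Fin n)) :
    shiftOp e T r i (e w) = (if w ∈ T then (r : ℂ) else 0) • e (i :: w) := by
  classical
  simp only [shiftOp, ContinuousLinearMap.smul_apply, ContinuousLinearMap.sum_apply,
    InnerProductSpace.rankOne_apply, orthonormal_iff_ite.1 he, ite_smul, one_smul, zero_smul]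
  rw [Finset.sum_ite_eq']
  split_ifs <;> simp

lemma wordProd_shift {H : Type*} [NormedAddCommGroup H] [InnerProductSpace ℂ H]
    {n : ℕ} {e : List (Fin n) → H} (he : Orthonormal ℂ e)
    (T : Finset (List (Fin n))) (r : ℝ) (w : List (Fin n)) :
    ∃ c : ℂ, wordProd (shiftOp e T r) w (e []) = c • e w ∧
      ((∀ s, s <:+ w → s ∈ T) → c = (r : ℂ) ^ w.length) := by
  induction w with
  | nil => exact ⟨1, by simp [wordProd], by simp⟩
  | cons i w ih =>
    obtain ⟨c, h1, h2⟩ := ih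
    refine ⟨c * (if w ∈ T then (r : ℂ) else 0), ?_, ?_⟩
    · have : wordProd (shiftOp e T r) (i :: w) (e [])
          = shiftOp e T r i (wordProd (shiftOp e T r) w (e [])) := by
        simp [wordProd]
      rw [this, h1, map_smul, shiftOp_apply_mem he, smul_smul]
    · intro h
      rw [h2 fun s hs => h s (hs.trans (List.suffix_cons i w)),
        if_pos (h w (List.suffix_cons i w)), List.length_cons, pow_succ]

lemma rowNorm_shift_le {H : Type*} [NormedAddCommGroup H] [InnerProductSpace ℂ H]
    [CompleteSpace H] {n : ℕ} {e : List (Fin n) → H} (he : Orthonormal ℂ e)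
    (T : Finset (List (Fin n))) {r : ℝ} (hr : 0 ≤ r) :
    rowNorm (shiftOp e T r) ≤ r := by
  classical
  unfold rowNorm
  rw [Real.sqrt_le_left hr]
  have hadj : ∀ i u, ContinuousLinearMap.adjoint (shiftOp e T r i) u =
      (r : ℂ) • ∑ w ∈ T, inner ℂ (e (i :: w)) u • e w := by
    intro i u
    rw [shiftOp, map_smulₛₗ, map_sum]
    simp [InnerProductSpace.adjoint_rankOne]
  have hS : ∀ u, (∑ i, shiftOp e T r i * ContinuousLinearMap.adjoint (shiftOp e T r i)) u =
      ∑ p ∈ (Finset.univ : Finset (Fin n)) ×ˢ T,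
        ((r : ℂ) ^ 2 * inner ℂ (e (p.1 :: p.2)) u) • e (p.1 :: p.2) := by
    intro u
    rw [ContinuousLinearMap.sum_apply, Finset.sum_product]
    refine Finset.sum_congr rfl fun i _ => ?_
    rw [ContinuousLinearMap.mul_apply, hadj, map_smul, map_sum, Finset.smul_sum]
    refine Finset.sum_congr rfl fun w hw => ?_
    rw [map_smul, shiftOp_apply_mem he, if_pos hw, smul_smul, smul_smul]
    congr 1
    ring
  have he' : Orthonormal ℂ (fun p : Fin n × List (Fin n) => e (p.1 :: p.2)) := by
    refine he.comp (fun p : Fin n × List (Fin n) => p.1 :: p.2) ?_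
    rintro ⟨a, b⟩ ⟨c, d⟩ h
    simpa using h
  refine ContinuousLinearMap.opNorm_le_bound _ (by positivity) fun u => ?_
  rw [hS]
  have hb := he'.sum_inner_products_le (s := (Finset.univ : Finset (Fin n)) ×ˢ T) u
  have hn : ‖∑ p ∈ (Finset.univ : Finset (Fin n)) ×ˢ T,
        ((r : ℂ) ^ 2 * inner ℂ (e (p.1 :: p.2)) u) • e (p.1 :: p.2)‖ ^ 2 ≤ (r ^ 2 * ‖u‖) ^ 2 := by
    have : ∀ c : Fin n × List (Fin n) → ℂ,
        ‖∑ p ∈ (Finset.univ : Finset (Fin n)) ×ˢ T, c p • e (p.1 :: p.2)‖ ^ 2 =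
          ∑ p ∈ (Finset.univ : Finset (Fin n)) ×ˢ T, ‖c p‖ ^ 2 := by
      intro c
      have h := he'.inner_sum c c ((Finset.univ : Finset (Fin n)) ×ˢ T)
      rw [inner_self_eq_norm_sq_to_K] at h
      simp only [RCLike.conj_mul] at h
      exact_mod_cast h
    rw [this]
    simp only [norm_mul, mul_pow, ← Finset.mul_sum]
    simp only [norm_pow, Complex.norm_real, Real.norm_eq_abs, sq_abs]
    gcongr
  exact le_of_sq_le_sq hn (by positivity)

lemma inner_homog_shift {H : Type*} [NormedAddCommGroup H] [InnerProductSpace ℂ H]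
    {n : ℕ} {e : List (Fin n) → H} (he : Orthonormal ℂ e)
    (T : Finset (List (Fin n))) (r : ℝ) (a : List (Fin n) → ℂ) (β : List (Fin n))
    (hβ : ∀ s, s <:+ β → s ∈ T) (k : ℕ) :
    inner ℂ (e β) (homog a (shiftOp e T r) k (e [])) =
      if k = β.length then a β * (r : ℂ) ^ β.length else 0 := by
  classical
  have key : ∀ w, inner ℂ (e β) (wordProd (shiftOp e T r) w (e [])) =
      if w = β then (r : ℂ) ^ β.length else 0 := by
    intro w
    obtain ⟨c, h1, h2⟩ := wordProd_shift he T r w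
    rw [h1, inner_smul_right, orthonormal_iff_ite.1 he]
    by_cases h : w = β
    · subst h
      simp [h2 hβ]
    · simp [h, Ne.symm h]
  simp only [homog, ContinuousLinearMap.sum_apply, ContinuousLinearMap.smul_apply, inner_sum,
    inner_smul_right, key]
  split_ifs with hk
  · subst hk
    rw [Finset.sum_eq_single (fun j => β.get j)]
    · simp
    · intro w _ hw
      rw [if_neg, mul_zero]
      intro h
      apply hw
      apply List.ofFn_injective
      simpa using h
    · simp
  · refine Finset.sum_eq_zero fun w _ => ?_
    rw [if_neg, mul_zero]
    rintro rfl
    simp at hk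

lemma inner_limit_shift {H : Type*} [NormedAddCommGroup H] [InnerProductSpace ℂ H]
    [CompleteSpace H] {n : ℕ} {e : List (Fin n) → H} (he : Orthonormal ℂ e)
    (T : Finset (List (Fin n))) (r : ℝ) (a : List (Fin n) → ℂ) (β : List (Fin n))
    (hβ : ∀ s, s <:+ β → s ∈ T) (L : H →L[ℂ] H)
    (hL : Tendsto (fun N => ∑ k ∈ Finset.range N, homog a (shiftOp e T r) k) atTop (nhds L)) :
    inner ℂ (e β) (L (e [])) = a β * (r : ℂ) ^ β.length := by
  have hc : Continuous fun A : H →L[ℂ] H => (inner ℂ (e β) (A (e [])) : ℂ) := by fun_prop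
  have h1 := (hc.tendsto L).comp hL
  refine tendsto_nhds_unique h1 (tendsto_const_nhds.congr' ?_)
  filter_upwards [eventually_gt_atTop β.length] with N hN
  simp only [Function.comp, ContinuousLinearMap.sum_apply, inner_sum,
    inner_homog_shift he T r a β hβ]
  rw [Finset.sum_ite_eq', if_pos (Finset.mem_range.2 hN)]

lemma coeff_zero {H : Type*} [NormedAddCommGroup H] [InnerProductSpace ℂ H] [CompleteSpace H]
    (hH : ¬ FiniteDimensional ℂ H) {n : ℕ} {γ : ℝ} (hγ : 0 < γ)
    (F : (Fin n → H →L[ℂ] H) → Fin n → H →L[ℂ] H)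
    (a : Fin n → List (Fin n) → ℂ)
    (ha : ∀ i, RepOn γ (a i) fun X => F X i)
    (hmaps : Set.MapsTo F (ball n H γ) (ball n H γ))
    (hF'0 : ∀ i j, a i [j] = if i = j then 1 else 0)
    (i : Fin n) (α : List (Fin n)) (hα : 2 ≤ α.length) : a i α = 0 := by
  classical
  obtain ⟨e, he⟩ := exists_orthonormal_words hH n
  set T : Finset (List (Fin n)) := α.tails.toFinset ∪ [i].tails.toFinset with hT
  have hT1 : ∀ s, s <:+ α → s ∈ T := by
    intro s hs
    simp only [hT, Finset.mem_union, List.mem_toFinset, List.mem_tails]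
    exact Or.inl hs
  have hT2 : ∀ s, s <:+ [i] → s ∈ T := by
    intro s hs
    simp only [hT, Finset.mem_union, List.mem_toFinset, List.mem_tails]
    exact Or.inr hs
  have hne : [i] ≠ α := by
    rintro rfl
    simp at hα
  have main : ∀ r : ℝ, 0 < r → r < γ → r ^ 2 + (‖a i α‖ * r ^ α.length) ^ 2 ≤ γ ^ 2 := by
    intro r hr0 hr
    have hX : shiftOp e T r ∈ ball n H γ := (rowNorm_shift_le he T hr0.le).trans_lt hr
    have hL := ha i _ hX
    have i1 := inner_limit_shift he T r (a i) α hT1 _ hL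
    have i2 := inner_limit_shift he T r (a i) [i] hT2 _ hL
    have hb := he.sum_inner_products_le (s := {[i], α}) (F (shiftOp e T r) i (e []))
    rw [Finset.sum_pair hne, i1, i2, hF'0] at hb
    have hn : ‖F (shiftOp e T r) i (e [])‖ ≤ γ := by
      calc ‖F (shiftOp e T r) i (e [])‖ ≤ ‖F (shiftOp e T r) i‖ * ‖e []‖ :=
            ContinuousLinearMap.le_opNorm _ _
        _ = ‖F (shiftOp e T r) i‖ := by rw [he.1, mul_one]
        _ ≤ rowNorm (F (shiftOp e T r)) := norm_comp_le_rowNorm _ _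
        _ ≤ γ := le_of_lt (hmaps hX)
    have hn2 : ‖F (shiftOp e T r) i (e [])‖ ^ 2 ≤ γ ^ 2 := by gcongr
    simpa [abs_of_pos hr0] using hb.trans hn2
  have hlim : γ ^ 2 + (‖a i α‖ * γ ^ α.length) ^ 2 ≤ γ ^ 2 := by
    have hc : Continuous fun r : ℝ => r ^ 2 + (‖a i α‖ * r ^ α.length) ^ 2 := by fun_prop
    refine le_of_tendsto ((hc.tendsto γ).mono_left (nhdsWithin_le_nhds (s := Set.Iio γ))) ?_
    filter_upwards [Ioo_mem_nhdsLT hγ] with r hr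
    exact main r hr.1 hr.2
  have h0 : (‖a i α‖ * γ ^ α.length) ^ 2 = 0 := le_antisymm (by linarith) (by positivity)
  have h1 : ‖a i α‖ * γ ^ α.length = 0 := by simpa using h0
  rcases mul_eq_zero.1 h1 with h | h
  · simpa using h
  · exact absurd h (by positivity)

end NC

open NC in
/-- **Noncommutative Cartan uniqueness theorem.**
If `F : [B(H)ⁿ]_γ → [B(H)ⁿ]_γ` is a free holomorphic map with `F(0) = 0` and `F'(0) = Iₙ`,
then `F` is the identity on `[B(H)ⁿ]_γ`. -/
theorem cartan_uniqueness
    {H : Type*} [NormedAddCommGroup H] [InnerProductSpace ℂ H] [CompleteSpace H]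
    [TopologicalSpace.SeparableSpace H] (hH : ¬ FiniteDimensional ℂ H)
    {n : ℕ} {γ : ℝ} (hγ : 0 < γ)
    (F : (Fin n → H →L[ℂ] H) → Fin n → H →L[ℂ] H)
    (a : Fin n → List (Fin n) → ℂ)
    (ha : ∀ i, RepOn γ (a i) fun X => F X i)
    (hmaps : Set.MapsTo F (ball n H γ) (ball n H γ))
    (hF0 : ∀ i, a i [] = 0)
    (hF'0 : ∀ i j, a i [j] = if i = j then 1 else 0) :
    ∀ X ∈ ball n H γ, F X = X := by
  intro X hX
  funext i
  refine tendsto_nhds_unique (ha i X hX) (tendsto_const_nhds.congr' ?_)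
  filter_upwards [eventually_ge_atTop 2] with N hN
  have h0 : homog (a i) X 0 = 0 := by simp [homog, hF0]
  have h1 : homog (a i) X 1 = X i := by
    unfold homog
    rw [← (Equiv.funUnique (Fin 1) (Fin n)).symm.sum_comp]
    simp [wordProd, hF'0]
  have h2 : ∀ k, 2 ≤ k → homog (a i) X k = 0 := by
    intro k hk
    refine Finset.sum_eq_zero fun w _ => ?_
    rw [coeff_zero hH hγ F a ha hmaps hF'0 i _ (by simpa using hk), zero_smul]
  rw [Finset.sum_eq_single 1]
  · exact h1.symm
  · intro k _ hk
    rcases Nat.lt_or_ge k 2 with h | h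
    · obtain rfl : k = 0 := by omega
      exact h0
    · exact h2 k h
  · intro h
    simp at h
    omega
end
end

section
/- Let F : [B(H)^n]_{γ1} → [B(H)^n]_{γ2} be a free biholomorphic map with F(0)=0. Then there is an invertible bounded linear operator L on ℂ^n such that F(X_1,...,X_n) = [X_1,...,X_n]L for every (X_1,...,X_n) ∈ [B(H)^n]_{γ1}; i.e., F = Φ_L is linear. -/
noncomputable section

open Filter

namespace NC

variable {H : Type*} [NormedAddCommGroup H] [InnerProductSpace ℂ H] [CompleteSpace H]

/-! ### Auxiliary material for the proof -/

lemma exists_on (hH : ¬ FiniteDimensional ℂ H) (n : ℕ) :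
    ∃ e : List (Fin n) → H, Orthonormal ℂ e := by
  let b := Module.Basis.ofVectorSpace ℂ H
  have hinf : Infinite (Module.Basis.ofVectorSpaceIndex ℂ H) := by
    by_contra h
    rw [not_infinite_iff_finite] at h
    exact hH (Module.Finite.of_basis b)
  let f := Infinite.natEmbedding (Module.Basis.ofVectorSpaceIndex ℂ H)
  have h1 : LinearIndependent ℂ (fun k : ℕ => b (f k)) :=
    b.linearIndependent.comp _ f.injective
  have h2 := InnerProductSpace.gramSchmidtNormed_orthonormal h1
  exact ⟨_, h2.comp (Encodable.encode : List (Fin n) → ℕ) Encodable.encode_injective⟩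

lemma inner_row {n : ℕ} (X : Fin n → H →L[ℂ] H) (x y : H) :
    inner ℂ ((∑ i, X i * ContinuousLinearMap.adjoint (X i)) x) y =
      ∑ i, inner ℂ (ContinuousLinearMap.adjoint (X i) x)
        (ContinuousLinearMap.adjoint (X i) y) := by
  simp [sum_apply, sum_inner, ContinuousLinearMap.adjoint_inner_right]

lemma inner_self_ofReal (x : H) : inner ℂ x x = ((‖x‖ ^ 2 : ℝ) : ℂ) := by
  rw [inner_self_eq_norm_sq_to_K]; simp

lemma sum_norm_sq_adj {n : ℕ} (X : Fin n → H →L[ℂ] H) (x : H) :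
    ∑ i, ‖ContinuousLinearMap.adjoint (X i) x‖ ^ 2 ≤ rowNorm X ^ 2 * ‖x‖ ^ 2 := by
  have h := inner_row X x x
  have h2 : ((∑ i, ‖ContinuousLinearMap.adjoint (X i) x‖ ^ 2 : ℝ) : ℂ) =
      inner ℂ ((∑ i, X i * ContinuousLinearMap.adjoint (X i)) x) x := by
    rw [h, Complex.ofReal_sum]
    exact Finset.sum_congr rfl fun i _ => (inner_self_ofReal _).symm
  have h3 : ∑ i, ‖ContinuousLinearMap.adjoint (X i) x‖ ^ 2 =
      ‖((∑ i, ‖ContinuousLinearMap.adjoint (X i) x‖ ^ 2 : ℝ) : ℂ)‖ := by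
    rw [Complex.norm_real, Real.norm_of_nonneg (Finset.sum_nonneg fun i _ => by positivity)]
  rw [h3, h2, rowNorm, Real.sq_sqrt (norm_nonneg _)]
  refine (norm_inner_le_norm _ _).trans ?_
  have := ContinuousLinearMap.le_opNorm (∑ i, X i * ContinuousLinearMap.adjoint (X i)) x
  nlinarith [norm_nonneg x]

lemma rowNorm_le {n : ℕ} (X : Fin n → H →L[ℂ] H) (r : ℝ) (hr : 0 ≤ r)
    (h : ∀ x, ∑ i, ‖ContinuousLinearMap.adjoint (X i) x‖ ^ 2 ≤ r ^ 2 * ‖x‖ ^ 2) :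
    rowNorm X ≤ r := by
  rw [rowNorm]
  refine Real.sqrt_le_iff.2 ⟨hr, ?_⟩
  refine ContinuousLinearMap.opNorm_le_bound _ (by positivity) fun x => ?_
  set y := (∑ i, X i * ContinuousLinearMap.adjoint (X i)) x with hy
  have h1 : ‖y‖ ^ 2 ≤ ∑ i, ‖ContinuousLinearMap.adjoint (X i) x‖ *
      ‖ContinuousLinearMap.adjoint (X i) y‖ := by
    have h2 : ‖y‖ ^ 2 = ‖inner ℂ y y‖ := by
      rw [inner_self_eq_norm_sq_to_K]; simp
    rw [h2]
    nth_rewrite 1 [hy]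
    rw [inner_row]
    exact (norm_sum_le _ _).trans (Finset.sum_le_sum fun i _ => norm_inner_le_norm _ _)
  have h3 := Finset.sum_mul_sq_le_sq_mul_sq Finset.univ
    (fun i => ‖ContinuousLinearMap.adjoint (X i) x‖)
    (fun i => ‖ContinuousLinearMap.adjoint (X i) y‖)
  have h4 : (‖y‖ ^ 2) ^ 2 ≤ (r ^ 2 * ‖x‖ ^ 2) * (r ^ 2 * ‖y‖ ^ 2) :=
    (pow_le_pow_left₀ (by positivity) h1 2).trans
      (h3.trans (mul_le_mul (h x) (h y) (Finset.sum_nonneg fun i _ => by positivity)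
        (by positivity)))
  rcases (norm_nonneg y).eq_or_lt with h0 | h0
  · rw [← h0]; positivity
  · have h5 : ‖y‖ ^ 2 ≤ (r ^ 2 * ‖x‖) ^ 2 := by
      have : 0 < ‖y‖ ^ 2 := by positivity
      nlinarith
    exact le_of_sq_le_sq h5 (by positivity)

lemma norm_comb_le {n : ℕ} (Y : Fin n → H →L[ℂ] H) (γ : ℝ) (hY : rowNorm Y ≤ γ)
    (c : Fin n → ℂ) (ξ : H) (hξ : ‖ξ‖ = 1) :
    ‖∑ j, c j • Y j ξ‖ ^ 2 ≤ γ ^ 2 * ∑ j, ‖c j‖ ^ 2 := by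
  set y := ∑ j, c j • Y j ξ with hy
  have hr0 : 0 ≤ rowNorm Y := Real.sqrt_nonneg _
  have h1 : ‖y‖ ^ 2 ≤ ∑ j, ‖c j‖ * ‖ContinuousLinearMap.adjoint (Y j) y‖ := by
    have h2 : ‖y‖ ^ 2 = ‖inner ℂ y y‖ := by
      rw [inner_self_eq_norm_sq_to_K]; simp
    rw [h2]
    nth_rewrite 1 [hy]
    rw [sum_inner]
    refine (norm_sum_le _ _).trans (Finset.sum_le_sum fun i _ => ?_)
    rw [inner_smul_left, norm_mul, ← ContinuousLinearMap.adjoint_inner_right]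
    have := norm_inner_le_norm (𝕜 := ℂ) ξ (ContinuousLinearMap.adjoint (Y i) y)
    rw [hξ, one_mul] at this
    simpa using mul_le_mul_of_nonneg_left this (norm_nonneg (c i))
  have h3 := Finset.sum_mul_sq_le_sq_mul_sq Finset.univ
    (fun i => ‖c i‖) (fun i => ‖ContinuousLinearMap.adjoint (Y i) y‖)
  have hc : 0 ≤ ∑ j, ‖c j‖ ^ 2 := Finset.sum_nonneg fun i _ => by positivity
  have hg : rowNorm Y ^ 2 ≤ γ ^ 2 := pow_le_pow_left₀ hr0 hY 2
  have h4 : (‖y‖ ^ 2) ^ 2 ≤ (∑ j, ‖c j‖ ^ 2) * (γ ^ 2 * ‖y‖ ^ 2) :=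
    (pow_le_pow_left₀ (by positivity) h1 2).trans
      (h3.trans (mul_le_mul_of_nonneg_left ((sum_norm_sq_adj Y y).trans
        (mul_le_mul_of_nonneg_right hg (by positivity))) hc))
  rcases (norm_nonneg y).eq_or_lt with h0 | h0
  · rw [← h0]
    have : 0 ≤ γ ^ 2 * ∑ j, ‖c j‖ ^ 2 := mul_nonneg (by positivity) hc
    simpa using this
  · have : 0 < ‖y‖ ^ 2 := by positivity
    nlinarith

/-- Truncated creation operators. -/
def shift {n : ℕ} (e : List (Fin n) → H) (k : ℕ) (i : Fin n) : H →L[ℂ] H :=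
  ∑ v ∈ (List.finite_length_lt (Fin n) k).toFinset, InnerProductSpace.rankOne ℂ (e (i :: v)) (e v)

lemma shift_apply {n : ℕ} {e : List (Fin n) → H} (he : Orthonormal ℂ e) (k : ℕ) (i : Fin n)
    (v : List (Fin n)) : shift e k i (e v) = if v.length < k then e (i :: v) else 0 := by
  classical
  simp only [shift, sum_apply, InnerProductSpace.rankOne_apply,
    orthonormal_iff_ite.1 he, ite_smul, one_smul, zero_smul]
  rw [Finset.sum_ite_eq']
  simp

lemma shift_row {n : ℕ} {e : List (Fin n) → H} (he : Orthonormal ℂ e) (k : ℕ) (x : H) :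
    ∑ i, ‖ContinuousLinearMap.adjoint (shift e k i) x‖ ^ 2 ≤ ‖x‖ ^ 2 := by
  classical
  set s := (List.finite_length_lt (Fin n) k).toFinset with hs
  have h1 : ∀ i, ‖ContinuousLinearMap.adjoint (shift e k i) x‖ ^ 2 =
      ∑ v ∈ s, ‖inner ℂ (e (i :: v)) x‖ ^ 2 := by
    intro i
    have h2 : ContinuousLinearMap.adjoint (shift e k i) x =
        ∑ v ∈ s, inner ℂ (e (i :: v)) x • e v := by
      simp [shift, map_sum, sum_apply, hs]
    have h3 := he.inner_sum (fun v => inner ℂ (e (i :: v)) x)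
      (fun v => inner ℂ (e (i :: v)) x) s
    rw [← h2, inner_self_eq_norm_sq_to_K] at h3
    have h4 : ((‖ContinuousLinearMap.adjoint (shift e k i) x‖ ^ 2 : ℝ) : ℂ) =
      ((∑ v ∈ s, ‖inner ℂ (e (i :: v)) x‖ ^ 2 : ℝ) : ℂ) := by
      push_cast
      refine h3.trans (Finset.sum_congr rfl fun v _ => ?_)
      exact Complex.conj_mul' _
    exact_mod_cast h4
  simp_rw [h1]
  rw [← Finset.sum_product']
  have hinj : Function.Injective (fun p : Fin n × List (Fin n) => p.1 :: p.2) := by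
    rintro ⟨a, b⟩ ⟨c, d⟩ h
    simpa using h
  exact (he.comp _ hinj).sum_inner_products_le x

lemma shift_mem {n : ℕ} {e : List (Fin n) → H} (he : Orthonormal ℂ e) (k : ℕ) {r γ : ℝ}
    (hr : 0 ≤ r) (hrγ : r < γ) : (fun i => (r : ℂ) • shift e k i) ∈ ball n H γ := by
  refine lt_of_le_of_lt (rowNorm_le _ r hr fun x => ?_) hrγ
  have : ∀ i, ‖ContinuousLinearMap.adjoint ((r : ℂ) • shift e k i) x‖ ^ 2 =
      r ^ 2 * ‖ContinuousLinearMap.adjoint (shift e k i) x‖ ^ 2 := by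
    intro i
    have h : ContinuousLinearMap.adjoint ((r : ℂ) • shift e k i) =
        (r : ℂ) • ContinuousLinearMap.adjoint (shift e k i) := by
      rw [LinearIsometryEquiv.map_smulₛₗ, Complex.conj_ofReal]
    rw [h, smul_apply, norm_smul, mul_pow, Complex.norm_real, Real.norm_eq_abs, sq_abs]
  simp_rw [this, ← Finset.mul_sum]
  exact mul_le_mul_of_nonneg_left (shift_row he k x) (by positivity)

lemma word_shift {n : ℕ} {e : List (Fin n) → H} (he : Orthonormal ℂ e) (k : ℕ) (r : ℝ)
    (w : List (Fin n)) : wordProd (fun i => (r : ℂ) • shift e k i) w (e []) =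
      if w.length ≤ k then (r : ℂ) ^ w.length • e w else 0 := by
  induction w with
  | nil => simp [wordProd]
  | cons i w ih =>
    have : wordProd (fun i => (r : ℂ) • shift e k i) (i :: w) (e []) =
        (r : ℂ) • shift e k i (wordProd (fun i => (r : ℂ) • shift e k i) w (e [])) := by
      simp [wordProd]
    rw [this, ih]
    by_cases h : w.length < k
    · have h' : w.length ≤ k := h.le
      simp [h, h', shift_apply he, smul_smul, pow_succ, mul_comm, Nat.succ_le_of_lt]
    · have h2 : ¬ (w.length + 1 ≤ k) := by omega
      by_cases h' : w.length ≤ k <;> simp [h, h', h2, shift_apply he]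

lemma inner_homog {n : ℕ} {e : List (Fin n) → H} (he : Orthonormal ℂ e) (k : ℕ) (r : ℝ)
    (a : List (Fin n) → ℂ) (w : List (Fin n)) (hw : w.length ≤ k) (m : ℕ) :
    inner ℂ (e w) (homog a (fun i => (r : ℂ) • shift e k i) m (e [])) =
      if m = w.length then (r : ℂ) ^ w.length * a w else 0 := by
  classical
  simp only [homog, sum_apply, smul_apply,
    word_shift he, inner_sum, inner_smul_right, List.length_ofFn]
  by_cases hm : m = w.length
  · rw [if_pos hm]
    subst hm
    rw [Finset.sum_eq_single w.get]
    · rw [List.ofFn_get]; simp [hw, inner_smul_right, he.1 w, mul_comm]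
    · intro u _ hu
      have : w ≠ List.ofFn u := by
        intro h
        apply hu
        apply List.ofFn_injective
        rw [← h, List.ofFn_get]
      simp [hw, inner_smul_right, orthonormal_iff_ite.1 he, this]
    · simp
  · rw [if_neg hm]
    refine Finset.sum_eq_zero fun u _ => ?_
    have : w ≠ List.ofFn u := by
      intro h
      apply hm
      rw [h]; simp
    split_ifs <;> simp [inner_smul_right, orthonormal_iff_ite.1 he, this]

lemma inner_rep {n : ℕ} {e : List (Fin n) → H} (he : Orthonormal ℂ e) (k : ℕ) {r γ : ℝ}
    (hr : 0 ≤ r) (hrγ : r < γ)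
    {a : List (Fin n) → ℂ} {F : (Fin n → H →L[ℂ] H) → H →L[ℂ] H} (hF : RepOn γ a F)
    (w : List (Fin n)) (hw : w.length ≤ k) :
    inner ℂ (e w) (F (fun i => (r : ℂ) • shift e k i) (e [])) = (r : ℂ) ^ w.length * a w := by
  have h := hF _ (shift_mem he k hr hrγ)
  have hc : Continuous fun T : H →L[ℂ] H => inner ℂ (e w) (T (e [])) := by fun_prop
  have h1 := (hc.tendsto _).comp h
  refine tendsto_nhds_unique h1 ?_
  refine tendsto_const_nhds.congr' ?_
  filter_upwards [eventually_gt_atTop w.length] with N hN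
  simp only [Function.comp, sum_apply, inner_sum, inner_homog he k r a w hw]
  rw [Finset.sum_ite_eq']
  simp [hN]

/-- The key coefficient inequality. -/
lemma coeff_bound (hH : ¬ FiniteDimensional ℂ H) {n : ℕ} {γ₁ γ₂ : ℝ} (hγ₁ : 0 < γ₁)
    {F : (Fin n → H →L[ℂ] H) → Fin n → H →L[ℂ] H} {a : Fin n → List (Fin n) → ℂ}
    (hF : ∀ j, RepOn γ₁ (a j) fun X => F X j)
    (hmaps : Set.MapsTo F (ball n H γ₁) (ball n H γ₂)) (s : Finset (List (Fin n)))
    (c : Fin n → ℂ) :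
    ∑ w ∈ s, (γ₁ ^ w.length * ‖∑ j, c j * a j w‖) ^ 2 ≤ γ₂ ^ 2 * ∑ j, ‖c j‖ ^ 2 := by
  obtain ⟨e, he⟩ := exists_on hH n
  set k := s.sup List.length with hk
  have key : ∀ r ∈ Set.Ioo 0 γ₁,
      ∑ w ∈ s, (r ^ w.length * ‖∑ j, c j * a j w‖) ^ 2 ≤ γ₂ ^ 2 * ∑ j, ‖c j‖ ^ 2 := by
    rintro r ⟨hr, hrγ⟩
    have hm := hmaps (shift_mem he k hr.le hrγ)
    have h1 := norm_comb_le _ γ₂ (le_of_lt hm) c (e []) (he.1 _)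
    refine le_trans ?_ h1
    refine le_trans (le_of_eq ?_) (he.sum_inner_products_le (s := s) _)
    refine Finset.sum_congr rfl fun w hw => ?_
    have hwk : w.length ≤ k := Finset.le_sup (f := List.length) hw
    rw [inner_sum]
    have : ∀ j, inner ℂ (e w) (c j • F (fun i => (r : ℂ) • shift e k i) j (e [])) =
        (r : ℂ) ^ w.length * (c j * a j w) := by
      intro j
      rw [inner_smul_right, inner_rep he k hr.le hrγ (hF j) w hwk]
      ring
    simp_rw [this, ← Finset.mul_sum]
    simp [abs_of_pos hr]
  have hcont : Continuous fun r : ℝ => ∑ w ∈ s, (r ^ w.length * ‖∑ j, c j * a j w‖) ^ 2 := by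
    fun_prop
  refine le_of_tendsto ((hcont.tendsto γ₁).mono_left nhdsWithin_le_nhds : Tendsto _
    (nhdsWithin γ₁ (Set.Iio γ₁)) _) ?_
  filter_upwards [Ioo_mem_nhdsLT hγ₁] with r hr using key r hr

lemma homog_zero {n : ℕ} (a : List (Fin n) → ℂ) (X : Fin n → H →L[ℂ] H) :
    homog a X 0 = a [] • 1 := by
  simp [homog, wordProd]

lemma homog_one {n : ℕ} (a : List (Fin n) → ℂ) (X : Fin n → H →L[ℂ] H) :
    homog a X 1 = ∑ i, a [i] • X i := by
  rw [homog, ← (Equiv.funUnique (Fin 1) (Fin n)).symm.sum_comp]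
  simp [wordProd]

lemma rep_linear {n : ℕ} {γ : ℝ} {a : List (Fin n) → ℂ}
    {F : (Fin n → H →L[ℂ] H) → H →L[ℂ] H} (hF : RepOn γ a F) {X : Fin n → H →L[ℂ] H}
    (hX : X ∈ ball n H γ) (h : ∀ k, homog a X (k + 2) = 0) :
    F X = a [] • 1 + ∑ i, a [i] • X i := by
  refine tendsto_nhds_unique (hF X hX) ?_
  refine tendsto_const_nhds.congr' ?_
  filter_upwards [eventually_ge_atTop 2] with N hN
  obtain ⟨m, rfl⟩ := Nat.exists_eq_add_of_le' hN
  rw [Finset.sum_range_succ', Finset.sum_range_succ']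
  simp only [h, homog_zero, homog_one, Finset.sum_const_zero, zero_add]
  exact add_comm _ _

lemma homog_nil {n : ℕ} (a : List (Fin n) → ℂ) {X : Fin n → H →L[ℂ] H}
    (hX : ∀ i j, X i * X j = 0) (k : ℕ) : homog a X (k + 2) = 0 := by
  refine Finset.sum_eq_zero fun w _ => ?_
  simp [wordProd, List.ofFn_succ, ← mul_assoc, hX]

lemma shift_one_mul {n : ℕ} {e : List (Fin n) → H} (he : Orthonormal ℂ e) (i j : Fin n) :
    shift e 1 i * shift e 1 j = 0 := by
  ext x
  have : ∀ i, shift e 1 i = InnerProductSpace.rankOne ℂ (e [i]) (e []) := by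
    intro i
    have h : (List.finite_length_lt (Fin n) 1).toFinset = {[]} := by
      ext v; simp
    simp [shift, h]
  rw [mul_apply_eq_comp, this j, InnerProductSpace.rankOne_apply, map_smul,
    shift_apply he]
  simp

end NC


open NC in
/-- A free biholomorphic map `F : [B(H)ⁿ]_{γ₁} → [B(H)ⁿ]_{γ₂}` with `F(0) = 0` is linear:
`F = Φ_L` for an invertible operator `L` on `ℂⁿ`. -/
theorem free_biholomorphic_fixing_origin_is_linear
    {H : Type*} [NormedAddCommGroup H] [InnerProductSpace ℂ H] [CompleteSpace H]
    [TopologicalSpace.SeparableSpace H] (hH : ¬ FiniteDimensional ℂ H)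
    {n : ℕ} {γ₁ γ₂ : ℝ} (hγ₁ : 0 < γ₁) (hγ₂ : 0 < γ₂)
    (F G : (Fin n → H →L[ℂ] H) → Fin n → H →L[ℂ] H)
    (hF : IsFreeHoloMap γ₁ F) (hFmaps : Set.MapsTo F (ball n H γ₁) (ball n H γ₂))
    (hG : IsFreeHoloMap γ₂ G) (hGmaps : Set.MapsTo G (ball n H γ₂) (ball n H γ₁))
    (hGF : ∀ X ∈ ball n H γ₁, G (F X) = X)
    (hFG : ∀ Y ∈ ball n H γ₂, F (G Y) = Y)
    (hF0 : F 0 = 0) :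
    ∃ L : Matrix (Fin n) (Fin n) ℂ, IsUnit L ∧
      ∀ X ∈ ball n H γ₁, ∀ j, F X j = ∑ i, L i j • X i := by
  classical
  choose a ha using hF
  choose b hb using hG
  obtain ⟨e, he⟩ := exists_on hH n
  have hzero : ∀ γ : ℝ, 0 < γ → (0 : Fin n → H →L[ℂ] H) ∈ ball n H γ := by
    intro γ hγ
    simpa [ball, rowNorm] using hγ
  have hone : (1 : H →L[ℂ] H) ≠ 0 := by
    intro h
    have h1 : ‖(1 : H →L[ℂ] H) (e [])‖ = 1 := by simpa using he.1 []
    rw [h] at h1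
    simp at h1
  have ha0 : ∀ j, a j [] = 0 := by
    intro j
    have h := rep_linear (ha j) (hzero γ₁ hγ₁) (homog_nil _ (by simp))
    simp only [hF0, Pi.zero_apply, smul_zero, Finset.sum_const_zero, add_zero] at h
    exact (smul_eq_zero.1 h.symm).resolve_right hone
  have hG0 : G 0 = 0 := by
    have := hGF 0 (hzero γ₁ hγ₁)
    rwa [hF0] at this
  have hb0 : ∀ j, b j [] = 0 := by
    intro j
    have h := rep_linear (hb j) (hzero γ₂ hγ₂) (homog_nil _ (by simp))
    simp only [hG0, Pi.zero_apply, smul_zero, Finset.sum_const_zero, add_zero] at h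
    exact (smul_eq_zero.1 h.symm).resolve_right hone
  set L : Matrix (Fin n) (Fin n) ℂ := Matrix.of fun i j => a j [i] with hL
  set M : Matrix (Fin n) (Fin n) ℂ := Matrix.of fun i j => b j [i] with hM
  -- the linear parts are inverse to each other
  have hLM : L * M = 1 := by
    ext i l
    obtain ⟨r, hr, hrγ⟩ := exists_between hγ₁
    set X : Fin n → H →L[ℂ] H := fun i => (r : ℂ) • shift e 1 i with hX
    have hXm : X ∈ ball n H γ₁ := shift_mem he 1 hr.le hrγ
    have hXX : ∀ i j, X i * X j = 0 := by
      intro i j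
      simp [hX, shift_one_mul he]
    have hFX : ∀ j, F X j = ∑ i, a j [i] • X i := by
      intro j
      have := rep_linear (ha j) hXm (homog_nil _ hXX)
      simpa [ha0] using this
    have hFF : ∀ i j, F X i * F X j = 0 := by
      intro i j
      rw [hFX, hFX, Finset.sum_mul]
      refine Finset.sum_eq_zero fun p _ => ?_
      rw [Finset.mul_sum]
      refine Finset.sum_eq_zero fun q _ => ?_
      simp [hXX]
    have hGX := rep_linear (hb l) (hFmaps hXm) (homog_nil _ hFF)
    simp only [hGF X hXm, hb0, zero_smul, zero_add] at hGX
    have h1 := congrArg (fun T : H →L[ℂ] H => inner ℂ (e [i]) (T (e []))) hGX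
    have hin : ∀ p, inner ℂ (e [i]) (X p (e [])) = if i = p then (r : ℂ) else 0 := by
      intro p
      simp only [hX, smul_apply, shift_apply he, inner_smul_right]
      simp [orthonormal_iff_ite.1 he]
    simp only [hFX, sum_apply, smul_apply, inner_sum,
      inner_smul_right, hin, mul_ite, mul_zero, Finset.sum_ite_eq, Finset.mem_univ, if_true] at h1
    have hr' : (r : ℂ) ≠ 0 := by exact_mod_cast hr.ne'
    rw [Matrix.mul_apply, Matrix.one_apply]
    have h2 : (∑ j, L i j * M j l) * (r : ℂ) = (if i = l then 1 else 0) * (r : ℂ) := by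
      rw [Finset.sum_mul, ite_mul, one_mul, zero_mul, h1]
      refine Finset.sum_congr rfl fun j _ => ?_
      simp [hL, hM]; ring
    exact mul_right_cancel₀ hr' h2
  have hML : M * L = 1 := mul_eq_one_comm.1 hLM
  have himg : ∀ f : List (Fin n) → ℝ, ∑ w ∈ Finset.univ.image (fun i : Fin n => [i]), f w =
      ∑ i, f [i] := by
    intro f
    rw [Finset.sum_image]
    intro i _ j _ h
    simpa using h
  -- vanishing of the coefficients of higher order
  have hvan : ∀ w : List (Fin n), 2 ≤ w.length → ∀ j, a j w = 0 := by
    intro w hw j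
    set c : Fin n → ℂ := Pi.single j 1 with hc
    have h1 := coeff_bound hH hγ₁ ha hFmaps (insert w (Finset.univ.image fun i : Fin n => [i])) c
    rw [Finset.sum_insert (by
      simp only [Finset.mem_image, not_exists, not_and]
      rintro i - rfl
      simp at hw), himg] at h1
    have h2 := coeff_bound hH hγ₂ hb hGmaps (Finset.univ.image fun i : Fin n => [i])
      (L.mulVec c)
    rw [himg] at h2
    have h3 : ∀ i, ∑ l, L.mulVec c l * b l [i] = c i := by
      intro i
      have : M.mulVec (L.mulVec c) = c := by
        rw [Matrix.mulVec_mulVec, hML, Matrix.one_mulVec]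
      rw [← congrFun this i]
      simp [Matrix.mulVec, dotProduct, hM, mul_comm]
    have h4 : ∀ i, ∑ l, c l * a l [i] = L.mulVec c i := by
      intro i
      simp [Matrix.mulVec, dotProduct, hL, mul_comm]
    simp only [h3, h4, List.length_singleton, pow_one, mul_pow, ← Finset.mul_sum] at h1 h2
    have h5 : (γ₁ ^ w.length) ^ 2 * ‖∑ l, c l * a l w‖ ^ 2 ≤ 0 := by linarith
    have h6 : ‖∑ l, c l * a l w‖ ^ 2 ≤ 0 := by
      have : 0 < (γ₁ ^ w.length) ^ 2 := by positivity
      by_contra hcon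
      push Not at hcon
      nlinarith [mul_pos this hcon]
    have h7 : ∑ l, c l * a l w = 0 := by
      have := le_antisymm h6 (by positivity)
      simpa using this
    simpa [hc, Pi.single_apply] using h7
  refine ⟨L, ?_, ?_⟩
  · exact ⟨⟨L, M, hLM, hML⟩, rfl⟩
  · intro X hX j
    have h := rep_linear (ha j) hX (fun k => Finset.sum_eq_zero fun w _ => by
      rw [hvan _ (by simp), zero_smul])
    simpa [ha0, hL] using h
end
end

section
/- (Maximum principle for free holomorphic functions.) If F : [B(H)^n]_1 → B(H) is a free holomorphic function with scalar coefficients and there exists X_0 ∈ [B(H)^n]_1 such that ‖F(X_0)‖ ≥ ‖F(X)‖ for all X ∈ [B(H)^n]_1, then F is constant. -/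
noncomputable section

open Filter

namespace NC

theorem wordProd_smul {H : Type*} [NormedAddCommGroup H] [InnerProductSpace ℂ H]
    [CompleteSpace H] {n : ℕ} (z : ℂ) (X : Fin n → H →L[ℂ] H) (w : List (Fin n)) :
    wordProd (z • X) w = z ^ w.length • wordProd X w := by
  induction w with
  | nil => simp [wordProd]
  | cons i w ih =>
    simp only [wordProd, List.map_cons, List.prod_cons, List.length_cons, Pi.smul_apply] at ih ⊢
    rw [ih, smul_mul_smul_comm, pow_succ']

theorem homog_smul {H : Type*} [NormedAddCommGroup H] [InnerProductSpace ℂ H]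
    [CompleteSpace H] {n : ℕ} (a : List (Fin n) → ℂ) (z : ℂ) (X : Fin n → H →L[ℂ] H) (k : ℕ) :
    homog a (z • X) k = z ^ k • homog a X k := by
  simp only [homog, Finset.smul_sum]
  refine Finset.sum_congr rfl fun w _ => ?_
  rw [wordProd_smul, List.length_ofFn, smul_comm]

theorem rowNorm_smul {H : Type*} [NormedAddCommGroup H] [InnerProductSpace ℂ H]
    [CompleteSpace H] {n : ℕ} (z : ℂ) (X : Fin n → H →L[ℂ] H) :
    rowNorm (z • X) = ‖z‖ * rowNorm X := by
  have h : ∑ i, (z • X) i * ContinuousLinearMap.adjoint ((z • X) i)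
      = (z * (starRingEnd ℂ) z) • ∑ i, X i * ContinuousLinearMap.adjoint (X i) := by
    rw [Finset.smul_sum]
    refine Finset.sum_congr rfl fun i _ => ?_
    rw [Pi.smul_apply, map_smulₛₗ, smul_mul_smul_comm]
  rw [rowNorm, h, norm_smul, norm_mul, RCLike.norm_conj, Real.sqrt_mul (by positivity),
    Real.sqrt_mul_self (norm_nonneg _), rowNorm]

theorem slice {H : Type*} [NormedAddCommGroup H] [InnerProductSpace ℂ H]
    [CompleteSpace H] {n : ℕ} {F : (Fin n → H →L[ℂ] H) → H →L[ℂ] H}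
    {a : List (Fin n) → ℂ} (ha : RepOn 1 a F) {X : Fin n → H →L[ℂ] H} (hX : X ∈ ball n H 1) :
    ∃ r : ℝ, 1 < r ∧ (∀ z ∈ Metric.ball (0 : ℂ) r, z • X ∈ ball n H 1) ∧
      DifferentiableOn ℂ (fun z : ℂ => F (z • X)) (Metric.ball 0 r) := by
  have h0 : 0 ≤ rowNorm X := Real.sqrt_nonneg _
  have hX1 : rowNorm X < 1 := hX
  obtain ⟨R, hR1, hR⟩ : ∃ R : ℝ, 1 < R ∧ R * rowNorm X < 1 := by
    refine ⟨2 / (1 + rowNorm X), ?_, ?_⟩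
    · rw [lt_div_iff₀ (by linarith)]; linarith
    · rw [div_mul_eq_mul_div, div_lt_one (by linarith)]; linarith
  obtain ⟨r, hr1, hrR⟩ := exists_between hR1
  have hmem : ∀ z : ℂ, ‖z‖ ≤ R → z • X ∈ ball n H 1 := by
    intro z hz
    change rowNorm (z • X) < 1
    rw [rowNorm_smul]
    exact (mul_le_mul_of_nonneg_right hz h0).trans_lt hR
  have hnR : ‖(R : ℂ)‖ = R := by
    rw [Complex.norm_real, Real.norm_of_nonneg (by linarith)]
  obtain ⟨C, hC⟩ : ∃ C, ∀ k, ‖homog a X k‖ * R ^ k ≤ C := by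
    have ht := ha _ (hmem (R : ℂ) hnR.le)
    have hz : Tendsto (fun k => homog a ((R : ℂ) • X) k) atTop (nhds 0) := by
      have := ((tendsto_add_atTop_iff_nat 1).2 ht).sub ht
      simpa [Finset.sum_range_succ] using this
    obtain ⟨C, hC⟩ := hz.norm.bddAbove_range
    refine ⟨C, fun k => ?_⟩
    have h3 : ‖homog a ((R : ℂ) • X) k‖ ≤ C := hC ⟨k, rfl⟩
    rwa [homog_smul, norm_smul, norm_pow, hnR, mul_comm] at h3
  have hsum : Summable fun k : ℕ => C * (r / R) ^ k :=
    (summable_geometric_of_lt_one (by positivity)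
      ((div_lt_one (by linarith)).2 hrR)).mul_left C
  have hbd : ∀ (k : ℕ) (z : ℂ), z ∈ Metric.ball (0 : ℂ) r →
      ‖z ^ k • homog a X k‖ ≤ C * (r / R) ^ k := by
    intro k z hz
    have hz' : ‖z‖ ≤ r := by simpa using (mem_ball_zero_iff.1 hz).le
    have hRk : 0 < R ^ k := by positivity
    rw [norm_smul, norm_pow, div_pow, ← mul_div_assoc, le_div_iff₀ hRk]
    calc ‖z‖ ^ k * ‖homog a X k‖ * R ^ k = (‖homog a X k‖ * R ^ k) * ‖z‖ ^ k := by ring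
      _ ≤ C * r ^ k := by
        have := hC k
        have h1 : 0 ≤ ‖homog a X k‖ * R ^ k := by positivity
        exact mul_le_mul this (pow_le_pow_left₀ (norm_nonneg _) hz' k) (by positivity)
          (h1.trans this)
  have hmem' : ∀ z ∈ Metric.ball (0 : ℂ) r, z • X ∈ ball n H 1 := fun z hz =>
    hmem z ((mem_ball_zero_iff.1 hz).le.trans hrR.le)
  refine ⟨r, hr1, hmem', ?_⟩
  have hd := Complex.differentiableOn_tsum_of_summable_norm (F := fun (k : ℕ) (z : ℂ) => z ^ k • homog a X k)
    hsum (fun k => by fun_prop) Metric.isOpen_ball hbd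
  refine hd.congr fun z hz => ?_
  have hs : Summable fun k : ℕ => z ^ k • homog a X k :=
    Summable.of_norm_bounded hsum fun k => hbd k z hz
  have h2 := ha _ (hmem' z hz)
  simp only [homog_smul] at h2
  exact tendsto_nhds_unique h2 hs.hasSum.tendsto_sum_nat

theorem rep_zero {H : Type*} [NormedAddCommGroup H] [InnerProductSpace ℂ H]
    [CompleteSpace H] {n : ℕ} {F : (Fin n → H →L[ℂ] H) → H →L[ℂ] H}
    {a : List (Fin n) → ℂ} (ha : RepOn 1 a F) : F 0 = a [] • 1 := by
  have hm : (0 : Fin n → H →L[ℂ] H) ∈ ball n H 1 := by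
    simp [ball, rowNorm]
  have h := ha 0 hm
  have h2 : HasSum (fun k => homog a (0 : Fin n → H →L[ℂ] H) k) (homog a 0 0) := by
    refine hasSum_single 0 fun k hk => ?_
    have := homog_smul a 0 (0 : Fin n → H →L[ℂ] H) k
    rwa [zero_smul, zero_pow hk, zero_smul] at this
  rw [tendsto_nhds_unique h h2.tendsto_sum_nat]
  simp [homog, wordProd]

end NC

open NC in
/-- **Maximum principle for free holomorphic functions.**
If a free holomorphic function `F` (with scalar coefficients) on `[B(H)ⁿ]_1` attains the
maximum of its norm at some point `X₀` of the ball, then `F` is constant. -/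
theorem maximum_principle
    {H : Type*} [NormedAddCommGroup H] [InnerProductSpace ℂ H] [CompleteSpace H]
    [TopologicalSpace.SeparableSpace H] (hH : ¬ FiniteDimensional ℂ H)
    {n : ℕ}
    (F : (Fin n → H →L[ℂ] H) → H →L[ℂ] H)
    (a : List (Fin n) → ℂ) (ha : RepOn 1 a F)
    (X₀ : Fin n → H →L[ℂ] H) (hX₀ : X₀ ∈ ball n H 1)
    (hmax : ∀ X ∈ ball n H 1, ‖F X‖ ≤ ‖F X₀‖) :
    ∀ X ∈ ball n H 1, F X = F X₀ := by
  have key : ∀ X ∈ ball n H 1, F X = F 0 := by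
    obtain ⟨r₀, hr₀, hm₀, hd₀⟩ := slice ha hX₀
    have h1mem : (1 : ℂ) ∈ Metric.ball (0 : ℂ) r₀ := by simpa using hr₀
    have h0mem : (0 : ℂ) ∈ Metric.ball (0 : ℂ) r₀ := by simp; linarith
    have hnorm : ‖F 0‖ = ‖F X₀‖ := by
      have := Complex.norm_eqOn_of_isPreconnected_of_isMaxOn
        (convex_ball (0 : ℂ) r₀).isPreconnected Metric.isOpen_ball hd₀ h1mem
        (fun z hz => by simpa using hmax _ (hm₀ z hz)) h0mem
      simpa using this
    have hM : ‖F X₀‖ ≤ ‖a []‖ := by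
      rw [← hnorm, rep_zero ha, norm_smul]
      exact mul_le_of_le_one_right (norm_nonneg _) ContinuousLinearMap.norm_id_le
    intro X hX
    obtain ⟨r, hr, hm, hd⟩ := slice ha hX
    have h1mem : (1 : ℂ) ∈ Metric.ball (0 : ℂ) r := by simpa using hr
    have h0mem : (0 : ℂ) ∈ Metric.ball (0 : ℂ) r := by simp; linarith
    ext x
    haveI : StrictConvexSpace ℝ H := by
      letI : InnerProductSpace ℝ H := InnerProductSpace.complexToReal
      haveI : UniformConvexSpace H := inferInstance
      exact UniformConvexSpace.toStrictConvexSpace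
    have := Complex.eqOn_of_isPreconnected_of_isMaxOn_norm
      (f := fun z : ℂ => F (z • X) x)
      (convex_ball (0 : ℂ) r).isPreconnected Metric.isOpen_ball
      (hd.clm_apply (differentiableOn_const x)) h0mem
      (fun z hz => by
        change ‖F (z • X) x‖ ≤ ‖F ((0 : ℂ) • X) x‖
        have h3 : ‖F ((0 : ℂ) • X) x‖ = ‖a []‖ * ‖x‖ := by
          rw [zero_smul, rep_zero ha]; simp [norm_smul]
        rw [h3]
        exact (F (z • X)).le_of_opNorm_le ((hmax _ (hm z hz)).trans hM) x) h1mem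
    simpa using this
  intro X hX
  rw [key X hX, key X₀ hX₀]
end
end

section
/- (Schwarz-type lemma.) Let F : [B(H)^n]_1 → [B(H)^m]_1 be a free holomorphic map. Then: (i) the map φ(X_1,...,X_n) := [X_1,...,X_n]F'(0)^t maps [B(H)^n]_1 into [B(H)^m]_1, where ^t denotes the transpose; in particular ‖F'(0)‖ ≤ 1; (ii) if F(0)=0, then ‖F(X)‖ ≤ ‖X‖ for every X ∈ [B(H)^n]_1. Moreover, if m=n, F : [B(H)^n]_1 → [B(H)^n]_1 is free holomorphic and F'(0) is a unitary operator on ℂ^n, then F is a free holomorphic automorphism of [B(H)^n]_1 and F(X) = [X_1,...,X_n][F'(0)]^t for all X ∈ [B(H)^n]_1. -/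
noncomputable section

open Filter

namespace NCAux

set_option linter.unusedSectionVars false

open NC Metric

section PowerSeries

variable {E : Type*} [NormedAddCommGroup E] [NormedSpace ℂ E]

/-- the one-variable formal power series with coefficients `c`. -/
def ser (c : ℕ → E) : FormalMultilinearSeries ℂ ℂ E :=
  fun k => ContinuousMultilinearMap.mkPiRing ℂ (Fin k) (c k)

lemma hasFPowerSeriesOnBall_ser [CompleteSpace E] {R : ℝ} (hR : 0 < R) (c : ℕ → E) (f : ℂ → E)
    (h : ∀ z : ℂ, ‖z‖ < R →
      Tendsto (fun N => ∑ k ∈ Finset.range N, z ^ k • c k) atTop (nhds (f z))) :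
    HasFPowerSeriesOnBall f (ser c) 0 (ENNReal.ofReal R) := by
  have hterm : ∀ z : ℂ, ‖z‖ < R → Tendsto (fun k => z ^ k • c k) atTop (nhds 0) := by
    intro z hz
    have h1 := h z hz
    have h2 := (h1.comp (tendsto_add_atTop_nat 1)).sub h1
    simpa [Finset.sum_range_succ] using h2
  have hrad : ENNReal.ofReal R ≤ (ser c).radius := by
    refine ENNReal.le_of_forall_nnreal_lt fun r hr => ?_
    have hr' : (r : ℝ) < R := by
      rw [← ENNReal.ofReal_coe_nnreal] at hr
      exact (ENNReal.ofReal_lt_ofReal_iff hR).1 hr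
    refine (ser c).le_radius_of_tendsto (l := 0) ?_
    have := (hterm (r : ℂ) (by simpa using hr')).norm
    simpa [ser, norm_smul, mul_comm] using this
  have hpos : 0 < ENNReal.ofReal R := ENNReal.ofReal_pos.2 hR
  refine ⟨hrad, hpos, ?_⟩
  intro y hy
  have hy' : ‖y‖ < R := by
    simpa using hy
  have hs := ((ser c).hasFPowerSeriesOnBall (lt_of_lt_of_le hpos hrad)).hasSum
    (y := y) (Metric.eball_subset_eball hrad hy)
  have h1 := hs.tendsto_sum_nat
  have h2 := h y hy'
  have h3 : (fun N => ∑ k ∈ Finset.range N, y ^ k • c k)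
      = fun N => ∑ k ∈ Finset.range N, (ser c k) fun _ => y := by
    funext N; simp [ser]
  rw [h3] at h2
  have := tendsto_nhds_unique h1 h2
  simp only [zero_add] at this hs ⊢
  rwa [this] at hs

lemma ser_differentiableOn [CompleteSpace E] {R : ℝ} {c : ℕ → E} {f : ℂ → E}
    (h : HasFPowerSeriesOnBall f (ser c) 0 (ENNReal.ofReal R)) :
    DifferentiableOn ℂ f (ball 0 R) := by
  have := h.differentiableOn
  rwa [Metric.eball_ofReal] at this

lemma ser_deriv {R : ℝ} {c : ℕ → E} {f : ℂ → E}
    (h : HasFPowerSeriesOnBall f (ser c) 0 (ENNReal.ofReal R)) :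
    deriv f 0 = c 1 := by
  have := h.hasFPowerSeriesAt.deriv
  simpa [ser] using this

lemma schwarz_gen {R : ℝ} {f : ℂ → E} (hR : 1 < R) (hd : DifferentiableOn ℂ f (ball 0 R))
    (h0 : f 0 = 0) (hb : ∀ z : ℂ, ‖z‖ < R → ‖f z‖ ≤ 1) : ‖f 1‖ ≤ 1 / R := by
  have := Complex.dist_le_div_mul_dist_of_mapsTo_ball (R₂ := 1) (z := 1) hd (by
      intro z hz'
      rw [h0, mem_closedBall_zero_iff]
      exact hb z (by simpa using hz')) (by simpa using hR)
  simpa [h0] using this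

end PowerSeries

section Rigid

variable {E : Type*} [NormedAddCommGroup E] [InnerProductSpace ℂ E]

/-- A contractive holomorphic function whose derivative at `0` is a unit vector is linear. -/
lemma rigid {f : ℂ → E} (hd : DifferentiableOn ℂ f (ball 0 1))
    (hb : ∀ z ∈ ball (0 : ℂ) 1, ‖f z‖ ≤ 1) (h1 : ‖deriv f 0‖ = 1) :
    ∀ z ∈ ball (0 : ℂ) 1, f z = z • deriv f 0 := by
  have hneg : Set.MapsTo (fun z : ℂ => -z) (ball 0 1) (ball 0 1) := by
    intro z hz; simpa using hz
  have hdn : DifferentiableOn ℂ (fun z => f (-z)) (ball 0 1) :=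
    hd.comp differentiable_neg.differentiableOn hneg
  set o : ℂ → E := fun z => (2⁻¹ : ℂ) • (f z - f (-z)) with ho
  set e : ℂ → E := fun z => (2⁻¹ : ℂ) • (f z + f (-z)) with he
  have hod : DifferentiableOn ℂ o (ball 0 1) := (hd.sub hdn).const_smul _
  have hed : DifferentiableOn ℂ e (ball 0 1) := (hd.add hdn).const_smul _
  have hda : HasDerivAt f (deriv f 0) 0 :=
    (hd.differentiableAt (ball_mem_nhds 0 one_pos)).hasDerivAt
  have hda' : HasDerivAt (fun z => f (-z)) (-deriv f 0) 0 := by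
    have hda0 : HasDerivAt f (deriv f 0) (-(0 : ℂ)) := by simpa using hda
    have := hda0.scomp (0 : ℂ) (hasDerivAt_neg (0 : ℂ))
    simpa [Function.comp_def] using this
  have hoder : deriv o 0 = deriv f 0 := by
    have := ((hda.sub hda').const_smul (2⁻¹ : ℂ)).deriv
    have h2 : (2⁻¹ : ℂ) • (deriv f 0 - -deriv f 0) = deriv f 0 := by
      rw [sub_neg_eq_add, ← two_smul ℂ, smul_smul]; norm_num
    rw [h2] at this
    exact this
  have ho0 : o 0 = 0 := by simp [ho]
  have homaps : Set.MapsTo o (ball 0 1) (closedBall (o 0) 1) := by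
    intro z hz
    rw [ho0, mem_closedBall_zero_iff]
    have := norm_sub_le (f z) (f (-z))
    have h2 := hb z hz
    have h3 := hb (-z) (hneg hz)
    simp only [ho, norm_smul, norm_inv, Complex.norm_ofNat]
    linarith
  have hsc : StrictConvexSpace ℝ E := by
    letI := InnerProductSpace.complexToReal (G := E)
    infer_instance
  have haff := Complex.affine_of_mapsTo_ball_of_norm_dslope_eq_div hod homaps
    (mem_ball_self one_pos) (by rw [dslope_same, hoder, h1]; norm_num)
  have hoz : ∀ z ∈ ball (0 : ℂ) 1, o z = z • deriv f 0 := by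
    intro z hz
    have := haff hz
    simpa [ho0, hoder] using this
  have hebound : ∀ z ∈ ball (0 : ℂ) 1, ‖e z‖ ≤ Real.sqrt (1 - ‖z‖ ^ 2) := by
    intro z hz
    apply Real.le_sqrt_of_sq_le
    have hp := parallelogram_law_with_norm ℂ (f z) (f (-z))
    have h2 := hb z hz
    have h3 := hb (-z) (hneg hz)
    have h4 : ‖o z‖ = ‖z‖ := by rw [hoz z hz, norm_smul, h1, mul_one]
    simp only [ho, norm_smul, norm_inv, Complex.norm_ofNat] at h4
    simp only [he, norm_smul, norm_inv, Complex.norm_ofNat]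
    rw [← h4]
    nlinarith [norm_nonneg (f z), norm_nonneg (f (-z))]
  have hez : ∀ z ∈ ball (0 : ℂ) 1, e z = 0 := by
    intro z hz
    have hz1 : ‖z‖ < 1 := by simpa using hz
    have hr : ∀ r : ℝ, ‖z‖ < r → r < 1 → ‖e z‖ ≤ Real.sqrt (1 - r ^ 2) := by
      intro r hr hr1
      have hr0 : 0 < r := lt_of_le_of_lt (norm_nonneg _) hr
      have hdc : DiffContOnCl ℂ e (ball 0 r) := by
        apply DifferentiableOn.diffContOnCl
        rw [closure_ball _ hr0.ne']
        exact hed.mono (closedBall_subset_ball hr1)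
      refine Complex.norm_le_of_forall_mem_frontier_norm_le isBounded_ball hdc ?_
        (subset_closure (by simpa using hr))
      intro w hw
      rw [frontier_ball _ hr0.ne', mem_sphere_zero_iff_norm] at hw
      have := hebound w (by simpa [hw] using hr1)
      rwa [hw] at this
    have hlim : Tendsto (fun r : ℝ => Real.sqrt (1 - r ^ 2)) (nhdsWithin 1 (Set.Iio 1))
        (nhds 0) := by
      have : Continuous fun r : ℝ => Real.sqrt (1 - r ^ 2) := by fun_prop
      have h := this.tendsto 1
      simp only [one_pow, sub_self, Real.sqrt_zero] at h
      exact h.mono_left nhdsWithin_le_nhds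
    have : ‖e z‖ ≤ 0 := by
      refine ge_of_tendsto hlim ?_
      filter_upwards [Ioo_mem_nhdsLT hz1] with r hr'
      exact hr r hr'.1 hr'.2
    exact norm_le_zero_iff.1 this
  intro z hz
  have h2 : f z = o z + e z := by
    simp only [ho, he, ← smul_add]
    rw [show f z - f (-z) + (f z + f (-z)) = f z + f z by abel, ← two_smul ℂ, smul_smul]
    norm_num
  rw [h2, hez z hz, hoz z hz, add_zero]

end Rigid

variable {H : Type*} [NormedAddCommGroup H] [InnerProductSpace ℂ H] [CompleteSpace H]

/-- The row operator. -/
def rowOp {m : ℕ} (X : Fin m → H →L[ℂ] H) : PiLp 2 (fun _ : Fin m => H) →L[ℂ] H :=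
  ∑ i, (X i).comp (PiLp.proj 2 (fun _ : Fin m => H) i)

lemma rowOp_apply {m : ℕ} (X : Fin m → H →L[ℂ] H) (x : PiLp 2 (fun _ : Fin m => H)) :
    rowOp X x = ∑ i, X i (x i) := by
  simp [rowOp, _root_.sum_apply]

lemma rowOp_adjoint {m : ℕ} (X : Fin m → H →L[ℂ] H) (h : H) (i : Fin m) :
    (ContinuousLinearMap.adjoint (rowOp X) h) i = ContinuousLinearMap.adjoint (X i) h := by
  have : ContinuousLinearMap.adjoint (rowOp X) h
      = WithLp.toLp 2 (fun i => ContinuousLinearMap.adjoint (X i) h) := by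
    refine ext_inner_right ℂ fun y => ?_
    rw [ContinuousLinearMap.adjoint_inner_left, rowOp_apply, PiLp.inner_apply, inner_sum]
    simp [ContinuousLinearMap.adjoint_inner_left]
  rw [this]

lemma rowNorm_eq {m : ℕ} (X : Fin m → H →L[ℂ] H) : rowNorm X = ‖rowOp X‖ := by
  have h1 : ∑ i, X i * ContinuousLinearMap.adjoint (X i)
      = (rowOp X).comp (ContinuousLinearMap.adjoint (rowOp X)) := by
    ext h
    simp [rowOp_apply, rowOp_adjoint, _root_.sum_apply]
  have h2 := ContinuousLinearMap.norm_adjoint_comp_self (ContinuousLinearMap.adjoint (rowOp X))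
  rw [ContinuousLinearMap.adjoint_adjoint] at h2
  rw [rowNorm, h1, h2, LinearIsometryEquiv.norm_map, Real.sqrt_mul_self (norm_nonneg _)]

lemma rowOp_smul {m : ℕ} (z : ℂ) (X : Fin m → H →L[ℂ] H) : rowOp (z • X) = z • rowOp X := by
  ext x
  simp [rowOp_apply, Finset.smul_sum]

lemma rowNorm_smul {m : ℕ} (z : ℂ) (X : Fin m → H →L[ℂ] H) :
    rowNorm (z • X) = ‖z‖ * rowNorm X := by
  have : ∑ i, (z • X) i * ContinuousLinearMap.adjoint ((z • X) i)
      = (z * star z) • ∑ i, X i * ContinuousLinearMap.adjoint (X i) := by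
    rw [Finset.smul_sum]
    refine Finset.sum_congr rfl fun i _ => ?_
    rw [← ContinuousLinearMap.star_eq_adjoint, ← ContinuousLinearMap.star_eq_adjoint,
      Pi.smul_apply, star_smul, smul_mul_smul_comm]
  rw [rowNorm, this, norm_smul, norm_mul, norm_star, Real.sqrt_mul (by positivity),
    Real.sqrt_mul_self (norm_nonneg _), rowNorm]

lemma rowNorm_nonneg {m : ℕ} (X : Fin m → H →L[ℂ] H) : 0 ≤ rowNorm X := Real.sqrt_nonneg _

lemma norm_entry_le {m : ℕ} (X : Fin m → H →L[ℂ] H) (j : Fin m) : ‖X j‖ ≤ rowNorm X := by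
  refine ContinuousLinearMap.opNorm_le_bound _ (rowNorm_nonneg X) fun v => ?_
  rw [rowNorm_eq]
  have := (rowOp X).le_opNorm (PiLp.single 2 j v)
  rw [rowOp_apply, PiLp.norm_single] at this
  convert this using 2
  rw [Finset.sum_eq_single j]
  · simp
  · intro i _ hi; simp [hi]
  · simp

lemma continuous_rowOp {m : ℕ} :
    Continuous (rowOp : (Fin m → H →L[ℂ] H) → PiLp 2 (fun _ : Fin m => H) →L[ℂ] H) := by
  unfold rowOp
  refine continuous_finsetSum _ fun i _ => ?_
  exact (continuous_apply i).clm_comp continuous_const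

lemma rowOp_sum {m : ℕ} {ι : Type*} (s : Finset ι) (Y : ι → Fin m → H →L[ℂ] H) :
    rowOp (fun j => ∑ k ∈ s, Y k j) = ∑ k ∈ s, rowOp (Y k) := by
  ext x
  simp only [rowOp_apply, _root_.sum_apply]
  rw [Finset.sum_comm]

lemma wordProd_smul {n : ℕ} (z : ℂ) (X : Fin n → H →L[ℂ] H) (w : List (Fin n)) :
    wordProd (z • X) w = z ^ w.length • wordProd X w := by
  unfold wordProd
  induction w with
  | nil => simp
  | cons i w ih =>
    simp only [List.map_cons, List.prod_cons, ih, List.length_cons, Pi.smul_apply]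
    rw [smul_mul_smul_comm, pow_succ']

lemma homog_smul {n : ℕ} (a : List (Fin n) → ℂ) (z : ℂ) (X : Fin n → H →L[ℂ] H) (k : ℕ) :
    homog a (z • X) k = z ^ k • homog a X k := by
  unfold homog
  rw [Finset.smul_sum]
  refine Finset.sum_congr rfl fun w _ => ?_
  rw [wordProd_smul, List.length_ofFn, smul_comm]

lemma homog_zero {n : ℕ} (a : List (Fin n) → ℂ) (X : Fin n → H →L[ℂ] H) :
    homog a X 0 = a [] • 1 := by
  simp [homog, wordProd]

lemma homog_one {n : ℕ} (a : List (Fin n) → ℂ) (X : Fin n → H →L[ℂ] H) :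
    homog a X 1 = ∑ i, a [i] • X i := by
  unfold homog
  rw [← (Equiv.funUnique (Fin 1) (Fin n)).symm.sum_comp]
  refine Finset.sum_congr rfl fun i _ => ?_
  simp [wordProd]

/-- The power series of `z ↦ F(zX)`, as row operators. -/
lemma slice {n m : ℕ} {F : (Fin n → H →L[ℂ] H) → Fin m → H →L[ℂ] H}
    {a : Fin m → List (Fin n) → ℂ}
    (ha : ∀ i, RepOn 1 (a i) fun X => F X i) (X : Fin n → H →L[ℂ] H) {R : ℝ} (hR : 0 < R)
    (hX : ∀ z : ℂ, ‖z‖ < R → z • X ∈ NC.ball n H 1) :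
    HasFPowerSeriesOnBall (fun z : ℂ => rowOp (F (z • X)))
      (ser fun k => rowOp fun j => homog (a j) X k) 0 (ENNReal.ofReal R) := by
  refine hasFPowerSeriesOnBall_ser hR _ _ fun z hz => ?_
  have h1 : Tendsto (fun N => fun j => ∑ k ∈ Finset.range N, homog (a j) (z • X) k) atTop
      (nhds (F (z • X))) := tendsto_pi_nhds.2 fun j => ha j (z • X) (hX z hz)
  have h2 := (continuous_rowOp.tendsto _).comp h1
  refine h2.congr fun N => ?_
  simp only [Function.comp]
  rw [rowOp_sum (Finset.range N) (fun k j => homog (a j) (z • X) k)]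
  refine Finset.sum_congr rfl fun k _ => ?_
  rw [← rowOp_smul]
  congr 1
  funext j
  exact homog_smul _ _ _ _

lemma smul_mem_ball {n : ℕ} {X : Fin n → H →L[ℂ] H} {s : ℝ} (hs : 0 < s) (hX : rowNorm X ≤ s)
    (z : ℂ) (hz : ‖z‖ < 1 / s) : z • X ∈ NC.ball n H 1 := by
  change rowNorm (z • X) < 1
  rw [rowNorm_smul]
  rw [lt_div_iff₀ hs] at hz
  exact lt_of_le_of_lt (mul_le_mul_of_nonneg_left hX (norm_nonneg z)) hz

theorem part_one {n m : ℕ} {F : (Fin n → H →L[ℂ] H) → Fin m → H →L[ℂ] H}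
    {a : Fin m → List (Fin n) → ℂ}
    (ha : ∀ i, RepOn 1 (a i) fun X => F X i)
    (hmaps : Set.MapsTo F (NC.ball n H 1) (NC.ball m H 1)) :
    Set.MapsTo (fun X => fun j : Fin m => ∑ i, a j [i] • X i)
        (NC.ball n H 1) (NC.ball m H 1) := by
  intro X hX
  obtain ⟨s, hs, hs1⟩ := exists_between (show rowNorm X < 1 from hX)
  have hs0 : 0 < s := lt_of_le_of_lt (rowNorm_nonneg X) hs
  have hR1 : 1 < 1 / s := by rw [lt_div_iff₀ hs0]; linarith
  have hmem := smul_mem_ball hs0 hs.le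
  have hser := slice ha X (by positivity) hmem
  have hd := ser_differentiableOn hser
  have hder := ser_deriv hser
  obtain ⟨r, hr1, hr⟩ := exists_between hR1
  have hr0 : 0 < r := by linarith
  have hdc : DiffContOnCl ℂ (fun z : ℂ => rowOp (F (z • X))) (Metric.ball 0 r) := by
    apply DifferentiableOn.diffContOnCl
    rw [closure_ball _ hr0.ne']
    exact hd.mono (closedBall_subset_ball hr)
  have := Complex.norm_deriv_le_of_forall_mem_sphere_norm_le (C := 1) hr0 hdc (by
    intro z hz
    have hz' : ‖z‖ = r := by simpa using hz
    have h := hmaps (hmem z (hz' ▸ hr))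
    rw [← rowNorm_eq]
    exact le_of_lt h)
  rw [hder, ← rowNorm_eq] at this
  simp only [homog_one] at this
  refine lt_of_le_of_lt this ?_
  rw [div_lt_one hr0]; exact hr1

theorem part_two {n m : ℕ} {F : (Fin n → H →L[ℂ] H) → Fin m → H →L[ℂ] H}
    {a : Fin m → List (Fin n) → ℂ}
    (ha : ∀ i, RepOn 1 (a i) fun X => F X i)
    (hmaps : Set.MapsTo F (NC.ball n H 1) (NC.ball m H 1)) (h0 : ∀ j, a j [] = 0) :
    ∀ X ∈ NC.ball n H 1, rowNorm (F X) ≤ rowNorm X := by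
  intro X hX
  have key : ∀ s, rowNorm X < s → s < 1 → rowNorm (F X) ≤ s := by
    intro s hs hs1
    have hs0 : 0 < s := lt_of_le_of_lt (rowNorm_nonneg X) hs
    have hR1 : 1 < 1 / s := by rw [lt_div_iff₀ hs0]; linarith
    have hmem := smul_mem_ball hs0 hs.le
    have hser := slice ha X (by positivity) hmem
    have hd := ser_differentiableOn hser
    have hz : rowOp (F ((0 : ℂ) • X)) = 0 := by
      have := hser.hasFPowerSeriesAt.coeff_zero (fun _ => 0)
      rw [← this]
      simp only [ser, homog_zero, h0, zero_smul]
      ext x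
      simp [rowOp_apply]
    have := schwarz_gen hR1 hd hz (by
      intro z hz'
      have h : rowNorm (F (z • X)) < 1 := hmaps (hmem z hz')
      rw [rowNorm_eq] at h
      exact h.le)
    rw [rowNorm_eq]
    simpa using this
  refine le_of_forall_gt_imp_ge_of_dense fun s hs => ?_
  by_cases hs1 : s < 1
  · exact key s hs hs1
  · exact (le_of_lt (hmaps hX)).trans (not_lt.1 hs1)

theorem part_norm {n m : ℕ} [Nontrivial H] (A : Matrix (Fin m) (Fin n) ℂ)
    (hA : Set.MapsTo (fun (X : Fin n → H →L[ℂ] H) => fun j : Fin m => ∑ i, A j i • X i)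
        (NC.ball n H 1) (NC.ball m H 1)) :
    ‖LinearMap.toContinuousLinearMap (Matrix.toEuclideanLin A)‖ ≤ 1 := by
  have hsc : ∀ {p : ℕ} (v : EuclideanSpace ℂ (Fin p)),
      rowNorm (fun i => v i • (1 : H →L[ℂ] H)) = ‖v‖ := by
    intro p v
    have : ∑ i, (v i • (1 : H →L[ℂ] H)) * ContinuousLinearMap.adjoint (v i • (1 : H →L[ℂ] H))
        = ((∑ i, ‖v i‖ ^ 2 : ℝ) : ℂ) • (1 : H →L[ℂ] H) := by
      push_cast
      rw [Finset.sum_smul]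
      refine Finset.sum_congr rfl fun i _ => ?_
      rw [← ContinuousLinearMap.star_eq_adjoint, star_smul, star_one, smul_mul_smul_comm, one_mul]
      congr 1
      exact Complex.mul_conj' (v i)
    rw [rowNorm, this, norm_smul, norm_one, mul_one, Complex.norm_real, Real.norm_of_nonneg
      (by positivity), EuclideanSpace.norm_eq]
  have hlt : ∀ v : EuclideanSpace ℂ (Fin n), ‖v‖ < 1 → ‖Matrix.toEuclideanLin A v‖ < 1 := by
    intro v hv
    have h1 : (fun i => v i • (1 : H →L[ℂ] H)) ∈ NC.ball n H 1 := by
      change rowNorm _ < 1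
      rwa [hsc]
    have h2 : rowNorm _ < 1 := hA h1
    rw [← hsc (Matrix.toEuclideanLin A v)]
    convert h2 using 3 with j
    simp [Matrix.toLpLin_apply, Matrix.mulVec, dotProduct, Finset.sum_smul, smul_smul]
  refine ContinuousLinearMap.opNorm_le_of_unit_norm zero_le_one fun x hx => ?_
  simp only [LinearMap.coe_toContinuousLinearMap']
  by_contra hlt1
  rw [not_le] at hlt1
  set t := ‖Matrix.toEuclideanLin A x‖ with ht
  have ht0 : 0 < t := by linarith
  have h1 := hlt (((t⁻¹ : ℝ) : ℂ) • x) (by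
    rw [norm_smul, hx, mul_one, Complex.norm_real, Real.norm_of_nonneg (by positivity)]
    exact inv_lt_one_of_one_lt₀ hlt1)
  rw [map_smul, norm_smul, Complex.norm_real, Real.norm_of_nonneg (by positivity), ← ht,
    inv_mul_cancel₀ ht0.ne'] at h1
  exact lt_irrefl _ h1

/-- Isometries with orthogonal ranges. -/
lemma exists_shifts (hH : ¬ FiniteDimensional ℂ H) (n : ℕ) :
    ∃ S : Fin n → H →L[ℂ] H, ∀ i j x y,
      inner ℂ (S i x) (S j y) = if i = j then inner ℂ x y else 0 := by
  obtain ⟨κ, b, -⟩ := exists_hilbertBasis ℂ H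
  have hinf : Infinite κ := by
    by_contra hfin
    rw [not_infinite_iff_finite] at hfin
    have := Fintype.ofFinite κ
    exact hH (b.toOrthonormalBasis.toBasis.finiteDimensional_of_finite)
  obtain ⟨e⟩ : Nonempty (Fin n × κ ↪ κ) := by
    rw [← Cardinal.le_def, Cardinal.mk_prod]
    refine Cardinal.mul_le_of_le (Cardinal.aleph0_le_mk κ) ?_ ?_
    · simpa using (Cardinal.natCast_lt_aleph0 (n := n)).le.trans (Cardinal.aleph0_le_mk κ)
    · simp
  have ho : ∀ i, Orthonormal ℂ (fun k : κ => b (e (i, k))) := fun i =>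
    b.orthonormal.comp _ (fun k l h => by simpa using e.injective h)
  let T : Fin n → H →ₗᵢ[ℂ] H := fun i =>
    ((ho i).orthogonalFamily.linearIsometry).comp b.repr.toLinearIsometry
  have hT : ∀ i x, HasSum (fun k => b.repr x k • b (e (i, k))) (T i x) := fun i x => by
    have := (ho i).orthogonalFamily.hasSum_linearIsometry (b.repr x)
    simpa [T] using this
  have h1 : ∀ i j, i ≠ j → ∀ k y, inner ℂ (b (e (i, k))) (T j y) = 0 := by
    intro i j hij k y
    have := (hT j y).mapL (innerSL ℂ (b (e (i, k))))
    refine this.unique ?_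
    convert hasSum_zero using 2 with l
    simp only [innerSL_apply_apply, inner_smul_right]
    rw [b.orthonormal.inner_eq_zero (by
      intro h; have := e.injective h; simp at this; exact hij this.1), mul_zero]
  refine ⟨fun i => (T i).toContinuousLinearMap, fun i j x y => ?_⟩
  simp only [LinearIsometry.coe_toContinuousLinearMap]
  split_ifs with hij
  · subst hij; exact (T i).inner_map_map x y
  · rw [inner_eq_zero_symm]
    have := (hT i x).mapL (innerSL ℂ (T j y))
    refine this.unique ?_
    convert hasSum_zero using 2 with l
    simp only [innerSL_apply_apply, inner_smul_right]
    rw [inner_eq_zero_symm.1 (h1 i j hij l y), mul_zero]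

lemma inner_word {n : ℕ} {S : Fin n → H →L[ℂ] H} (hS : ∀ i j x y,
      inner ℂ (S i x) (S j y) = if i = j then inner ℂ x y else 0) {v : H} (hv : ‖v‖ = 1) :
    ∀ w w' : List (Fin n), w.length = w'.length →
      inner ℂ (wordProd S w v) (wordProd S w' v) = if w = w' then (1 : ℂ) else 0
  | [], [], _ => by simp [wordProd, inner_self_eq_norm_sq_to_K, hv]
  | i :: w, j :: w', h => by
    have ih := inner_word hS hv w w' (by simpa using h)
    have h1 : ∀ i w, wordProd S (i :: w) v = S i (wordProd S w v) := fun i w => by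
      simp [wordProd]
    rw [h1, h1, hS, ih]
    by_cases hij : i = j <;> simp [hij]

lemma shifts_rowNorm {n : ℕ} {S : Fin n → H →L[ℂ] H} (hS : ∀ i j x y,
      inner ℂ (S i x) (S j y) = if i = j then inner ℂ x y else 0) : rowNorm S ≤ 1 := by
  rw [rowNorm_eq]
  refine ContinuousLinearMap.opNorm_le_bound _ zero_le_one fun x => ?_
  rw [one_mul]
  refine le_of_eq ?_
  have : inner ℂ (rowOp S x) (rowOp S x) = inner ℂ x x := by
    rw [rowOp_apply, sum_inner, PiLp.inner_apply]
    refine Finset.sum_congr rfl fun i _ => ?_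
    rw [inner_sum]
    simp [hS]
  rw [inner_self_eq_norm_sq_to_K, inner_self_eq_norm_sq_to_K] at this
  have h2 : ‖rowOp S x‖ ^ 2 = ‖x‖ ^ 2 := by exact_mod_cast this
  exact (pow_left_inj₀ (norm_nonneg _) (norm_nonneg _) two_ne_zero).1 h2

lemma inner_homog {n : ℕ} {S : Fin n → H →L[ℂ] H} (hS : ∀ i j x y,
      inner ℂ (S i x) (S j y) = if i = j then inner ℂ x y else 0) {v : H} (hv : ‖v‖ = 1)
    (b : List (Fin n) → ℂ) (w : List (Fin n)) :
    inner ℂ (wordProd S w v) (homog b S w.length v) = b w := by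
  simp only [homog, _root_.sum_apply, inner_sum, _root_.smul_apply,
    inner_smul_right]
  rw [Finset.sum_eq_single w.get]
  · rw [inner_word hS hv _ _ (by simp)]; simp
  · intro u _ hu
    rw [inner_word hS hv _ _ (by simp), if_neg, mul_zero]
    intro h
    apply hu
    apply List.ofFn_injective
    rw [← h, List.ofFn_get]
  · simp

/-- Coefficients other than the linear ones vanish. -/
theorem coeff_zero_of_unitary (hH : ¬ FiniteDimensional ℂ H) {n : ℕ}
    {G : (Fin n → H →L[ℂ] H) → Fin n → H →L[ℂ] H} {b : Fin n → List (Fin n) → ℂ}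
    (hb : ∀ i, RepOn 1 (b i) fun X => G X i)
    (hmaps : Set.MapsTo G (NC.ball n H 1) (NC.ball n H 1))
    (j : Fin n) (hj : ∑ i, ‖b j [i]‖ ^ 2 = 1) (w : List (Fin n)) (hw : w.length ≠ 1) :
    b j w = 0 := by
  have : Nontrivial H := by
    by_contra h
    rw [not_nontrivial_iff_subsingleton] at h
    exact hH inferInstance
  obtain ⟨S, hS⟩ := exists_shifts hH n
  obtain ⟨v, hv⟩ := exists_norm_eq H zero_le_one
  have hmem : ∀ z : ℂ, ‖z‖ < 1 → z • S ∈ NC.ball n H 1 := fun z hz =>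
    smul_mem_ball one_pos (shifts_rowNorm hS) z (by simpa using hz)
  have hser := hasFPowerSeriesOnBall_ser one_pos (fun k => homog (b j) S k v)
    (fun z : ℂ => G (z • S) j v) (by
      intro z hz
      have h := ((ContinuousLinearMap.apply ℂ H v).continuous.tendsto _).comp
        (hb j (z • S) (hmem z hz))
      refine h.congr fun N => ?_
      simp [homog_smul])
  have hd := ser_differentiableOn hser
  have hder := ser_deriv hser
  have hn : ‖homog (b j) S 1 v‖ = 1 := by
    have h1 : inner ℂ (homog (b j) S 1 v) (homog (b j) S 1 v) = (1 : ℂ) := by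
      rw [homog_one]
      simp only [_root_.sum_apply, _root_.smul_apply, sum_inner,
        inner_sum, inner_smul_left, inner_smul_right, hS]
      have : ((∑ i, ‖b j [i]‖ ^ 2 : ℝ) : ℂ) = 1 := by rw [hj]; simp
      rw [← this]
      push_cast
      refine Finset.sum_congr rfl fun i _ => ?_
      simp [inner_self_eq_norm_sq_to_K, hv, Complex.mul_conj']
    have h2 : ‖homog (b j) S 1 v‖ ^ 2 = 1 := by
      rw [← inner_self_eq_norm_sq (𝕜 := ℂ), h1]; simp
    exact (pow_eq_one_iff_of_nonneg (norm_nonneg _) two_ne_zero).1 h2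
  have hr := rigid hd (by
    intro z hz
    have h1 : rowNorm (G (z • S)) < 1 := hmaps (hmem z (by simpa using hz))
    have h2 := norm_entry_le (G (z • S)) j
    have h3 := (G (z • S) j).le_opNorm v
    rw [hv, mul_one] at h3
    linarith) (by rw [hder, hn])
  rw [hder] at hr
  have hser2 := hasFPowerSeriesOnBall_ser one_pos
    (fun k => if k = 1 then homog (b j) S 1 v else 0)
    (fun z : ℂ => G (z • S) j v) (by
      intro z hz
      rw [hr z (by simpa using hz)]
      refine tendsto_const_nhds.congr' ?_
      filter_upwards [eventually_ge_atTop 2] with N hN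
      rw [Finset.sum_eq_single 1]
      · simp
      · intro k _ hk; simp [hk]
      · intro h; simp at h; omega)
  have heq := hser.hasFPowerSeriesAt.eq_formalMultilinearSeries hser2.hasFPowerSeriesAt
  have hk := congrArg (fun p : FormalMultilinearSeries ℂ ℂ H => p w.length fun _ => 1) heq
  simp only [ser, ContinuousMultilinearMap.mkPiRing_apply, Finset.prod_const_one, one_smul,
    if_neg hw] at hk
  rw [← inner_homog hS hv (b j) w, hk, inner_zero_right]

lemma repOn_linear {n : ℕ} (c : List (Fin n) → ℂ) (hc : ∀ w, w.length ≠ 1 → c w = 0)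
    (X : Fin n → H →L[ℂ] H) :
    Tendsto (fun N => ∑ k ∈ Finset.range N, homog c X k) atTop
      (nhds (∑ i, c [i] • X i)) := by
  refine tendsto_const_nhds.congr' ?_
  filter_upwards [eventually_ge_atTop 2] with N hN
  rw [Finset.sum_eq_single (s := Finset.range N) (f := fun k => homog c X k) 1]
  · rw [homog_one]
  · intro k _ hk
    unfold homog
    refine Finset.sum_eq_zero fun w _ => ?_
    rw [hc _ (by simpa using hk), zero_smul]
  · intro h; simp at h; omega

lemma rowNorm_unitary {n : ℕ} {U : Matrix (Fin n) (Fin n) ℂ}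
    (hU : U ∈ Matrix.unitaryGroup (Fin n) ℂ) (X : Fin n → H →L[ℂ] H) :
    rowNorm (fun j => ∑ i, U j i • X i) = rowNorm X := by
  have h1 := Matrix.mem_unitaryGroup_iff'.1 hU
  have h2 : ∀ i k, ∑ j, U j i * star (U j k) = if i = k then 1 else 0 := by
    intro i k
    have := congrFun (congrFun h1 k) i
    rw [Matrix.mul_apply, Matrix.one_apply] at this
    simp only [Matrix.star_apply] at this
    simp only [mul_comm (U _ i), this, eq_comm]
  unfold rowNorm
  congr 2
  simp only [← ContinuousLinearMap.star_eq_adjoint, star_sum, star_smul, Finset.sum_mul,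
    Finset.mul_sum, smul_mul_smul_comm]
  rw [Finset.sum_comm]
  refine Finset.sum_congr rfl fun i _ => ?_
  rw [Finset.sum_comm]
  simp only [← Finset.sum_smul, h2]
  simp

lemma unitary_comp {n : ℕ} {U V : Matrix (Fin n) (Fin n) ℂ} (h : U * V = 1)
    (X : Fin n → H →L[ℂ] H) (j : Fin n) : ∑ i, U j i • ∑ k, V i k • X k = X j := by
  simp only [Finset.smul_sum, smul_smul]
  rw [Finset.sum_comm]
  simp only [← Finset.sum_smul, ← Matrix.mul_apply, h, Matrix.one_apply]
  simp

theorem part_three (hH : ¬ FiniteDimensional ℂ H) {n : ℕ}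
    {G : (Fin n → H →L[ℂ] H) → Fin n → H →L[ℂ] H} {b : Fin n → List (Fin n) → ℂ}
    (hb : ∀ i, RepOn 1 (b i) fun X => G X i)
    (hmaps : Set.MapsTo G (NC.ball n H 1) (NC.ball n H 1))
    (hU : (Matrix.of fun (i : Fin n) (j : Fin n) => b i [j]) ∈ Matrix.unitaryGroup (Fin n) ℂ) :
    IsFreeAut 1 G ∧ ∀ X ∈ NC.ball n H 1, ∀ j, G X j = ∑ i, b j [i] • X i := by
  set U : Matrix (Fin n) (Fin n) ℂ := Matrix.of fun (i : Fin n) (j : Fin n) => b i [j] with hUdef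
  have hUij : ∀ i j, U i j = b i [j] := fun i j => rfl
  have hUU := Matrix.mem_unitaryGroup_iff.1 hU
  have hUU' := Matrix.mem_unitaryGroup_iff'.1 hU
  have hrow : ∀ j, ∑ i, ‖b j [i]‖ ^ 2 = 1 := by
    intro j
    have := congrFun (congrFun hUU j) j
    rw [Matrix.mul_apply, Matrix.one_apply, if_pos rfl] at this
    have h2 : ((∑ i, ‖b j [i]‖ ^ 2 : ℝ) : ℂ) = 1 := by
      rw [← this]
      push_cast
      refine Finset.sum_congr rfl fun i _ => ?_
      rw [Matrix.star_apply, hUij]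
      exact (Complex.mul_conj' _).symm
    exact_mod_cast h2
  have hlin : ∀ X ∈ NC.ball n H 1, ∀ j, G X j = ∑ i, b j [i] • X i := by
    intro X hX j
    exact tendsto_nhds_unique (hb j X hX)
      (repOn_linear (b j) (coeff_zero_of_unitary hH hb hmaps j (hrow j)) X)
  refine ⟨⟨fun i => ⟨b i, hb i⟩, hmaps, fun X j => ∑ i, (star U) j i • X i, ?_, ?_, ?_, ?_⟩, hlin⟩
  · intro j
    refine ⟨fun w => match w with
      | [i] => (star U) j i
      | _ => 0, fun X _ => ?_⟩
    refine repOn_linear _ ?_ X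
    intro w hw
    match w, hw with
    | [], _ => rfl
    | [i], hw => simp at hw
    | _ :: _ :: _, _ => rfl
  · intro X hX
    change rowNorm _ < 1
    rw [rowNorm_unitary (Unitary.star_mem hU)]
    exact hX
  · intro X hX
    funext j
    have := unitary_comp hUU' X j
    simp only [hlin X hX]
    exact this
  · intro X hX
    funext j
    rw [hlin]
    · exact unitary_comp hUU X j
    · change rowNorm _ < 1
      rw [rowNorm_unitary (Unitary.star_mem hU)]
      exact hX

end NCAux

open NC in
/-- **Schwarz-type lemma for free holomorphic maps.**
For a free holomorphic map `F : [B(H)ⁿ]_1 → [B(H)ᵐ]_1` with coefficients `a`: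
(i) `X ↦ [X₁,…,Xₙ]·F'(0)ᵗ` maps `[B(H)ⁿ]_1` into `[B(H)ᵐ]_1`, and `‖F'(0)‖ ≤ 1`;
(ii) if `F(0) = 0` then `‖F(X)‖ ≤ ‖X‖` on the ball.  Moreover, if `m = n` and `F'(0)` is
a unitary on `ℂⁿ`, then `F` is a free holomorphic automorphism of `[B(H)ⁿ]_1` and
`F(X) = [X₁,…,Xₙ]·[F'(0)]ᵗ`. -/
theorem schwarz_lemma
    {H : Type*} [NormedAddCommGroup H] [InnerProductSpace ℂ H] [CompleteSpace H]
    [TopologicalSpace.SeparableSpace H] (hH : ¬ FiniteDimensional ℂ H)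
    {n m : ℕ}
    (F : (Fin n → H →L[ℂ] H) → Fin m → H →L[ℂ] H)
    (a : Fin m → List (Fin n) → ℂ)
    (ha : ∀ i, RepOn 1 (a i) fun X => F X i)
    (hmaps : Set.MapsTo F (ball n H 1) (ball m H 1)) :
    (Set.MapsTo (fun X => fun j : Fin m => ∑ i, a j [i] • X i)
        (ball n H 1) (ball m H 1)) ∧
    ‖LinearMap.toContinuousLinearMap
        (Matrix.toEuclideanLin (Matrix.of fun (i : Fin m) (j : Fin n) => a i [j]))‖ ≤ 1 ∧
    ((∀ j, a j [] = 0) → ∀ X ∈ ball n H 1, rowNorm (F X) ≤ rowNorm X) ∧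
    (∀ (G : (Fin n → H →L[ℂ] H) → Fin n → H →L[ℂ] H)
        (b : Fin n → List (Fin n) → ℂ),
        (∀ i, RepOn 1 (b i) fun X => G X i) →
        Set.MapsTo G (ball n H 1) (ball n H 1) →
        (Matrix.of fun (i : Fin n) (j : Fin n) => b i [j]) ∈ Matrix.unitaryGroup (Fin n) ℂ →
        IsFreeAut 1 G ∧ ∀ X ∈ ball n H 1, ∀ j, G X j = ∑ i, b j [i] • X i) := by
  have : Nontrivial H := by
    by_contra h
    rw [not_nontrivial_iff_subsingleton] at h
    exact hH inferInstance
  have h1 := NCAux.part_one ha hmaps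
  exact ⟨h1, NCAux.part_norm (H := H) (Matrix.of fun (i : Fin m) (j : Fin n) => a i [j]) h1,
    NCAux.part_two ha hmaps, fun G b hb hG hU => NCAux.part_three hH hb hG hU⟩
end
end
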